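/- Fix positive integers c and n. Let N_rect(x₁,…,xₙ) denote, for positive integers x₁,…,xₙ with d = x₁+⋯+xₙ, the sum of mult(γ) over all λ-increasing lattice paths γ from (0,d) to (c,0) with n+c+1 steps contained in the rectangle Δ of width c and height d equipped with boundary data μ₁ = (c), μ₂ = (1,…,1) (c parts equal to 1), ν₁ = (x₁,…,xₙ), ν₂ = (d). Then there exists a single polynomial P ∈ ℚ[X₁,…,Xₙ] such that N_rect(x₁,…,xₙ) = P(x₁,…,xₙ) for all positive integers x₁,…,xₙ satisfying Σ_{i∈I} xᵢ ≠ Σ_{j∈J} xⱼ for every pair of distinct subsets I, J ⊆ {1,…,n}. -/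

import Mathlib

open Classical

noncomputable section

namespace TropPaths

/-- Lattice points of the plane. -/
abbrev Pt := ℤ × ℤ

/-- The order on `ℤ²` induced by `λ(x,y) = x - εy` for a small irrational `ε > 0`:
`p ≺ q` iff `p₁ < q₁`, or (`p₁ = q₁` and `p₂ > q₂`). -/
def lamLT (p q : Pt) : Prop := p.1 < q.1 ∨ (p.1 = q.1 ∧ q.2 < p.2)

/-- A lattice path, recorded as the list of its points, is `λ`-increasing. -/
def Increasing (γ : List Pt) : Prop := List.Chain' lamLT γ

/-- The determinant of two vectors in `ℤ²`. -/
def det (u v : Pt) : ℤ := u.1 * v.2 - u.2 * v.1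

/-- The `k`-th point of a path (junk value out of range). -/
def pt (γ : List Pt) (k : ℕ) : Pt := γ.getD k (0, 0)

/-- The `k`-th step vector of a path. -/
def stepAt (γ : List Pt) (k : ℕ) : Pt := pt γ (k + 1) - pt γ k

/-- The list of all step vectors of a path. -/
def steps (γ : List Pt) : List Pt := List.zipWith (fun a b => b - a) γ γ.tail

/-- The multiset of down steps `(0,-s)`, `s > 0`, of a path. -/
def downSteps (γ : List Pt) : Multiset Pt :=
  Multiset.filter (fun v => v.1 = 0 ∧ v.2 < 0) (steps γ : Multiset Pt)

/-- The multiset of up-right steps of a path. -/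
def upRightSteps (γ : List Pt) : Multiset Pt :=
  Multiset.filter (fun v => 0 < v.1 ∧ 0 < v.2) (steps γ : Multiset Pt)

/-- The path makes a turn of sign `s` at the (interior) index `k`; for left turns
`s = (0 < ·)`, for right turns `s = (· < 0)`. -/
def TurnAt (s : ℤ → Prop) (γ : List Pt) (k : ℕ) : Prop :=
  0 < k ∧ k + 1 < γ.length ∧ s (det (pt γ k - pt γ (k - 1)) (pt γ (k + 1) - pt γ k))

/-- `k` is the first turn of sign `s` of the path. -/
def FirstTurn (s : ℤ → Prop) (γ : List Pt) (k : ℕ) : Prop :=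
  TurnAt s γ k ∧ ∀ j, TurnAt s γ j → k ≤ j

/-- Twice the area of the triangle with vertices `γ(k-1), γ(k), γ(k+1)`. -/
def triArea2 (γ : List Pt) (k : ℕ) : ℕ :=
  (det (pt γ k - pt γ (k - 1)) (pt γ (k + 1) - pt γ k)).natAbs

/-- The path obtained by cutting the corner at index `k`, i.e. deleting the point `γ(k)`. -/
def cut (γ : List Pt) (k : ℕ) : List Pt := γ.eraseIdx k

/-- The path obtained by completing the parallelogram at index `k`, i.e. replacing
`γ(k)` by `γ(k-1) + γ(k+1) - γ(k)`. -/
def push (γ : List Pt) (k : ℕ) : List Pt :=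
  γ.set k (pt γ (k - 1) + pt γ (k + 1) - pt γ k)

/-- All points of the path lie in `Δ`. -/
def Inside (Δ : Set Pt) (γ : List Pt) : Prop := ∀ z ∈ γ, z ∈ Δ

/-- Mikhalkin's multiplicity recursion, as a functional relation: `MultRel Δ Init s γ m`
means that the recursion (performed always at the *first* turn of sign `s`) assigns the
multiplicity `m` to the path `γ`.  Here `Δ` is the set of lattice points of the polygon,
`Init` the set of initial paths (of multiplicity `1`), and `s` the turn sign
(`0 < ·` for left turns / `mult₊`, `· < 0` for right turns / `mult₋`). -/
inductive MultRel (Δ : Set Pt) (Init : List Pt → Prop) (s : ℤ → Prop) : List Pt → ℕ → Prop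
  | init {γ : List Pt} : Init γ → MultRel Δ Init s γ 1
  | noTurn {γ : List Pt} : ¬Init γ → (∀ k, ¬TurnAt s γ k) → MultRel Δ Init s γ 0
  | stepIn {γ : List Pt} {k m' m'' : ℕ} : ¬Init γ → FirstTurn s γ k →
      Inside Δ (push γ k) → MultRel Δ Init s (cut γ k) m' →
      MultRel Δ Init s (push γ k) m'' →
      MultRel Δ Init s γ (triArea2 γ k * m' + m'')
  | stepOut {γ : List Pt} {k m' : ℕ} : ¬Init γ → FirstTurn s γ k →
      ¬Inside Δ (push γ k) → MultRel Δ Init s (cut γ k) m' →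
      MultRel Δ Init s γ (triArea2 γ k * m')

/-- The multiplicity function determined by Mikhalkin's recursion. -/
def multOf (Δ : Set Pt) (Init : List Pt → Prop) (s : ℤ → Prop) (γ : List Pt) : ℕ :=
  if h : ∃ m, MultRel Δ Init s γ m then h.choose else 0

/-- `γ ≺ δ`: the path `δ` is obtained from `γ` by finitely many steps of the multiplicity
recursion (each step cuts the corner at the first turn of sign `s`, or completes the
parallelogram there). -/
inductive Reaches (Δ : Set Pt) (Init : List Pt → Prop) (s : ℤ → Prop) : List Pt → List Pt → Prop
  | refl (γ : List Pt) : Reaches Δ Init s γ γ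
  | cutStep {γ δ : List Pt} {k : ℕ} : ¬Init γ → FirstTurn s γ k →
      Reaches Δ Init s (cut γ k) δ → Reaches Δ Init s γ δ
  | pushStep {γ δ : List Pt} {k : ℕ} : ¬Init γ → FirstTurn s γ k →
      Inside Δ (push γ k) → Reaches Δ Init s (push γ k) δ → Reaches Δ Init s γ δ

/-- The lattice path starting at `p` with the given list of step vectors. -/
def pathFrom : Pt → List Pt → List Pt
  | p, [] => [p]
  | p, v :: vs => p :: pathFrom (p + v) vs

/-- Horizontal (rightward) steps of the given sizes. -/
def hSteps (l : List ℕ) : List Pt := l.map fun k => ((k : ℤ), 0)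

/-- Vertical downward steps of the given sizes. -/
def dSteps (l : List ℕ) : List Pt := l.map fun k => ((0 : ℤ), -(k : ℤ))

/-- A multiset of positive integers is a partition of `t`. -/
def IsPartition (m : Multiset ℕ) (t : ℕ) : Prop := (∀ k ∈ m, 0 < k) ∧ m.sum = t

/-! ## The rectangle `[0,c] × [0,d]` -/

/-- The lattice points of the rectangle with vertices `(0,0), (c,0), (0,d), (c,d)`. -/
def rect (c d : ℕ) : Set Pt := {z | 0 ≤ z.1 ∧ z.1 ≤ (c : ℤ) ∧ 0 ≤ z.2 ∧ z.2 ≤ (d : ℤ)}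

/-- `β₊`-initial paths of the rectangle: from `p = (0,d)` clockwise along the top edge with
step sizes the parts of `μ₂` and then down the right edge with step sizes the parts of `ν₂`. -/
def InitPlusRect (d : ℕ) (μ₂ ν₂ : Multiset ℕ) (γ : List Pt) : Prop :=
  ∃ s t : List ℕ, (s : Multiset ℕ) = μ₂ ∧ (t : Multiset ℕ) = ν₂ ∧
    γ = pathFrom (0, (d : ℤ)) (hSteps s ++ dSteps t)

/-- `β₋`-initial paths of the rectangle: from `p = (0,d)` counterclockwise down the left edge
with step sizes the parts of `ν₁` and then along the bottom edge with step sizes the parts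
of `μ₁`. -/
def InitMinusRect (d : ℕ) (μ₁ ν₁ : Multiset ℕ) (γ : List Pt) : Prop :=
  ∃ s t : List ℕ, (s : Multiset ℕ) = ν₁ ∧ (t : Multiset ℕ) = μ₁ ∧
    γ = pathFrom (0, (d : ℤ)) (dSteps s ++ hSteps t)

/-- `mult₊` for the rectangle with boundary data `(μ₁, μ₂, ν₁, ν₂)`. -/
def multPlusRect (c d : ℕ) (μ₂ ν₂ : Multiset ℕ) : List Pt → ℕ :=
  multOf (rect c d) (InitPlusRect d μ₂ ν₂) (fun x => 0 < x)

/-- `mult₋` for the rectangle with boundary data `(μ₁, μ₂, ν₁, ν₂)`. -/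
def multMinusRect (c d : ℕ) (μ₁ ν₁ : Multiset ℕ) : List Pt → ℕ :=
  multOf (rect c d) (InitMinusRect d μ₁ ν₁) (fun x => x < 0)

/-- `mult = mult₊ · mult₋` for the rectangle with boundary data `(μ₁, μ₂, ν₁, ν₂)`. -/
def multRect (c d : ℕ) (μ₁ μ₂ ν₁ ν₂ : Multiset ℕ) (γ : List Pt) : ℕ :=
  multPlusRect c d μ₂ ν₂ γ * multMinusRect c d μ₁ ν₁ γ

/-- A `λ`-increasing lattice path from `(0,d)` to `(c,0)` contained in the rectangle. -/
def IsPathRect (c d : ℕ) (γ : List Pt) : Prop :=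
  Increasing γ ∧ γ.head? = some (0, (d : ℤ)) ∧ γ.getLast? = some ((c : ℤ), 0) ∧
    Inside (rect c d) γ

/-- The genericity condition: all subset sums of the `xᵢ` are distinct. -/
def Generic {n : ℕ} (x : Fin n → ℕ) : Prop :=
  ∀ I J : Finset (Fin n), I ≠ J → ∑ i ∈ I, x i ≠ ∑ j ∈ J, x j

/-!
A path is determined by its list of steps; cutting a corner adds two consecutive steps and
completing a parallelogram swaps them. Reading the recursion for `mult₊` backwards from the
initial path, one sees that a path of nonzero `mult₊` is a *run*: each vertical step puts its size
into a stock, each other step is `(1, h)` with `h` the sum of sizes taken out of the stock, and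
finally only `d` is left. Positivity of `mult₋` forces the last step to be the vertical one of
size `d` and the other vertical steps to have sizes `x₁, …, xₙ`.

Since the `xᵢ` have distinct subset sums, a step `(1, h)` determines what it takes out. Hence at
each left turn only one branch of the recursion survives, and `mult₊ = x₁ ⋯ xₙ`. On the other side
all non-vertical steps of a run rise weakly, and `mult₋` satisfies the same recursion as the
product of the signed areas of the triangles cut off when the non-vertical steps are absorbed into
the last step one after the other, which is a polynomial in their coordinates.

Recording which of the `xᵢ` each step adds or removes labels the contributing paths by words that
do not depend on `x`. There are finitely many words, and each contributes a polynomial.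
-/

/-! ### Paths as lists of steps -/

section Steps

variable (p : Pt) (S T σ : List Pt) (u v : Pt)

lemma head?_pathFrom : (pathFrom p σ).head? = some p := by cases σ <;> rfl

lemma length_pathFrom : (pathFrom p σ).length = σ.length + 1 := by
  induction σ generalizing p with
  | nil => rfl
  | cons a σ ih => simp [pathFrom, ih]

lemma pathFrom_append_cons :
    pathFrom p (S ++ v :: T) = pathFrom p S ++ pathFrom (p + S.sum + v) T := by
  induction S generalizing p with
  | nil => simp [pathFrom]
  | cons a S ih => simp [pathFrom, ih, add_assoc]

lemma getLast?_pathFrom : (pathFrom p σ).getLast? = some (p + σ.sum) := by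
  cases σ using List.reverseRecOn with
  | nil => simp [pathFrom]
  | append_singleton σ v => simp [pathFrom_append_cons, pathFrom, add_assoc]

lemma pathFrom_injective : Function.Injective (pathFrom p) := by
  intro σ
  induction σ generalizing p with
  | nil =>
    intro τ h
    simpa [length_pathFrom] using congrArg List.length h
  | cons a σ ih =>
    rintro (_ | ⟨b, τ⟩) h
    · simpa [length_pathFrom] using congrArg List.length h
    · have htail : pathFrom (p + a) σ = pathFrom (p + b) τ := (List.cons.inj h).2
      obtain rfl : a = b := by
        simpa [head?_pathFrom] using congrArg List.head? htail
      rw [ih _ htail]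

lemma mem_pathFrom {z : Pt} : z ∈ pathFrom p σ ↔ ∃ S T, σ = S ++ T ∧ z = p + S.sum := by
  induction σ generalizing p with
  | nil => simp [pathFrom]
  | cons a σ ih =>
    simp only [pathFrom, List.mem_cons, ih, List.cons_eq_append_iff]
    constructor
    · rintro (rfl | ⟨S, T, rfl, rfl⟩)
      · exact ⟨[], a :: σ, .inl ⟨rfl, rfl⟩, by simp⟩
      · exact ⟨a :: S, T, .inr ⟨S, rfl, rfl⟩, by simp [add_assoc]⟩
    · rintro ⟨S, T, ⟨rfl, -⟩ | ⟨S, rfl, rfl⟩, rfl⟩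
      · simp
      · exact .inr ⟨S, T, rfl, by simp [add_assoc]⟩

lemma inside_pathFrom_iff {Δ : Set Pt} :
    Inside Δ (pathFrom p σ) ↔ ∀ S T, σ = S ++ T → p + S.sum ∈ Δ := by
  simp only [Inside, mem_pathFrom]
  exact ⟨fun h S T hσ => h _ ⟨S, T, hσ, rfl⟩, by rintro h _ ⟨S, T, hσ, rfl⟩; exact h S T hσ⟩

lemma inside_pathFrom_cut {Δ : Set Pt} (h : Inside Δ (pathFrom p (S ++ u :: v :: T))) :
    Inside Δ (pathFrom p (S ++ (u + v) :: T)) := by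
  simp only [pathFrom_append_cons, pathFrom, Inside, List.mem_append, List.mem_cons,
    add_assoc] at h ⊢
  grind

lemma inside_pathFrom_push {Δ : Set Pt} (h : Inside Δ (pathFrom p (S ++ u :: v :: T)))
    (hpush : p + S.sum + v ∈ Δ) : Inside Δ (pathFrom p (S ++ v :: u :: T)) := by
  simp only [pathFrom_append_cons, pathFrom, Inside, List.mem_append, List.mem_cons,
    add_right_comm _ v u] at h ⊢
  grind

lemma pt_pathFrom {k : ℕ} (hk : k ≤ σ.length) : pt (pathFrom p σ) k = p + (σ.take k).sum := by
  induction σ generalizing p k with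
  | nil =>
    obtain rfl : k = 0 := by simpa using hk
    simp [pt, pathFrom]
  | cons a σ ih =>
    cases k with
    | zero => simp [pt, pathFrom]
    | succ k => simpa [pt, pathFrom, add_assoc] using ih (p + a) (by simpa using hk)

lemma pt_succ_sub_pt_pathFrom {k : ℕ} (hk : k < σ.length) :
    pt (pathFrom p σ) (k + 1) - pt (pathFrom p σ) k = σ[k] := by
  rw [pt_pathFrom _ _ hk, pt_pathFrom _ _ hk.le, List.sum_take_succ σ k hk]
  abel

lemma cut_pathFrom :
    cut (pathFrom p (S ++ u :: v :: T)) (S.length + 1) = pathFrom p (S ++ (u + v) :: T) := by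
  rw [pathFrom_append_cons, pathFrom_append_cons, cut, ← length_pathFrom p S,
    List.eraseIdx_append_of_length_le le_rfl]
  simp [pathFrom, add_assoc]

lemma push_pathFrom :
    push (pathFrom p (S ++ u :: v :: T)) (S.length + 1) = pathFrom p (S ++ v :: u :: T) := by
  have hcorner : pt (pathFrom p (S ++ u :: v :: T)) S.length
      + pt (pathFrom p (S ++ u :: v :: T)) (S.length + 1 + 1)
      - pt (pathFrom p (S ++ u :: v :: T)) (S.length + 1) = p + S.sum + v := by
    rw [pt_pathFrom _ _ (by simp), add_sub_assoc, pt_succ_sub_pt_pathFrom _ _ (by simp)]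
    simp
  rw [push, Nat.add_sub_cancel, hcorner, pathFrom_append_cons, pathFrom_append_cons,
    ← length_pathFrom p S, List.set_append_right _ _ le_rfl]
  simp [pathFrom, add_right_comm _ v u]

end Steps

/-! ### Turns -/

/-- A list of steps in which no two consecutive ones make a turn of sign `s`. -/
def NoTurn (s : ℤ → Prop) : List Pt → Prop := List.IsChain fun u v => ¬s (det u v)

section Turns

variable {s : ℤ → Prop} {p u v : Pt} {S T σ : List Pt}

lemma noTurn_or_exists_firstTurn (s : ℤ → Prop) (σ : List Pt) :
    NoTurn s σ ∨ ∃ S u v T, σ = S ++ u :: v :: T ∧ s (det u v) ∧ NoTurn s (S ++ [u]) := by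
  induction σ using List.reverseRecOn with
  | nil => exact .inl List.isChain_nil
  | append_singleton σ v ih =>
    rcases ih with hσ | ⟨S, u, v', T, rfl, hs, hS⟩
    · cases σ using List.reverseRecOn with
      | nil => exact .inl (List.isChain_singleton v)
      | append_singleton S u =>
        by_cases hs : s (det u v)
        · exact .inr ⟨S, u, v, [], by simp, hs, hσ⟩
        · exact .inl (List.isChain_append.2 ⟨hσ, List.isChain_singleton v, by simpa using hs⟩)
    · exact .inr ⟨S, u, v', T ++ [v], by simp, hs, hS⟩

lemma turnAt_pathFrom {k : ℕ} : TurnAt s (pathFrom p σ) k ↔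
    ∃ i, k = i + 1 ∧ ∃ h : i + 1 < σ.length, s (det σ[i] σ[i + 1]) := by
  rcases k with _ | i
  · simp [TurnAt]
  · simp only [TurnAt, length_pathFrom, Nat.add_sub_cancel, Nat.add_right_cancel_iff,
      Nat.zero_lt_succ, true_and, Nat.add_lt_add_iff_right, exists_eq_left']
    constructor
    · rintro ⟨h, hs⟩
      rw [pt_succ_sub_pt_pathFrom _ _ h, pt_succ_sub_pt_pathFrom _ _ (by lia)] at hs
      exact ⟨h, hs⟩
    · rintro ⟨h, hs⟩
      rw [pt_succ_sub_pt_pathFrom _ _ h, pt_succ_sub_pt_pathFrom _ _ (by lia)]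
      exact ⟨h, hs⟩

lemma NoTurn.not_turnAt (h : NoTurn s σ) (p : Pt) (k : ℕ) : ¬TurnAt s (pathFrom p σ) k := by
  rw [turnAt_pathFrom]
  rintro ⟨i, -, hi, hs⟩
  exact List.isChain_iff_getElem.1 h i hi hs

lemma NoTurn.firstTurn_pathFrom (hS : NoTurn s (S ++ [u])) (hs : s (det u v)) :
    FirstTurn s (pathFrom p (S ++ u :: v :: T)) (S.length + 1) := by
  refine ⟨turnAt_pathFrom.2 ⟨S.length, rfl, by simp, by simpa using hs⟩, fun j hj => ?_⟩
  obtain ⟨i, rfl, hi, hsi⟩ := turnAt_pathFrom.1 hj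
  by_contra hlt
  have hchain := List.isChain_iff_getElem.1 hS i (by grind)
  grind

lemma triArea2_pathFrom : triArea2 (pathFrom p (S ++ u :: v :: T)) (S.length + 1) =
    (det u v).natAbs := by
  rw [triArea2, Nat.add_sub_cancel, pt_succ_sub_pt_pathFrom _ _ (by simp),
    pt_succ_sub_pt_pathFrom _ _ (by simp)]
  simp

end Turns

/-! ### The multiplicity recursion as a function of the steps -/

section Multiplicity

variable {Δ : Set Pt} {Init : List Pt → Prop} {s : ℤ → Prop}

lemma FirstTurn.unique {γ : List Pt} {j k : ℕ} (hj : FirstTurn s γ j) (hk : FirstTurn s γ k) :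
    j = k :=
  (hj.2 k hk.1).antisymm (hk.2 j hj.1)

lemma MultRel.unique {γ : List Pt} {m n : ℕ} (hm : MultRel Δ Init s γ m)
    (hn : MultRel Δ Init s γ n) : m = n := by
  induction hm generalizing n with
  | init hinit => cases hn <;> first | rfl | contradiction
  | noTurn hinit hturn =>
    cases hn with
    | init => contradiction
    | noTurn => rfl
    | stepIn _ hk | stepOut _ hk => exact absurd hk.1 (hturn _)
  | stepIn hinit hk hin _ _ ihcut ihpush =>
    cases hn with
    | init => contradiction
    | noTurn _ hturn => exact absurd hk.1 (hturn _)
    | stepIn _ hk' _ hcut hpush =>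
      obtain rfl := hk.unique hk'
      rw [ihcut hcut, ihpush hpush]
    | stepOut _ hk' hout =>
      obtain rfl := hk.unique hk'
      contradiction
  | stepOut hinit hk hout _ ihcut =>
    cases hn with
    | init => contradiction
    | noTurn _ hturn => exact absurd hk.1 (hturn _)
    | stepIn _ hk' hin =>
      obtain rfl := hk.unique hk'
      contradiction
    | stepOut _ hk' _ hcut =>
      obtain rfl := hk.unique hk'
      rw [ihcut hcut]

lemma MultRel.multOf_eq {γ : List Pt} {m : ℕ} (h : MultRel Δ Init s γ m) :
    multOf Δ Init s γ = m := by
  have hex : ∃ m, MultRel Δ Init s γ m := ⟨m, h⟩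
  rw [multOf, dif_pos hex]
  exact hex.choose_spec.unique h

/-- Twice the signed area swept out, as seen from the origin, by the path with steps `σ` starting
at `p`.  Completing parallelograms at turns of one sign changes it monotonically. -/
def sweptArea : Pt → List Pt → ℤ
  | _, [] => 0
  | p, v :: σ => det p v + sweptArea (p + v) σ

lemma sweptArea_append (p : Pt) (S T : List Pt) :
    sweptArea p (S ++ T) = sweptArea p S + sweptArea (p + S.sum) T := by
  induction S generalizing p with
  | nil => simp [sweptArea]
  | cons a S ih => simp [sweptArea, ih, add_assoc]

lemma sweptArea_push (p : Pt) (S : List Pt) (u v : Pt) (T : List Pt) :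
    sweptArea p (S ++ v :: u :: T) = sweptArea p (S ++ u :: v :: T) - 2 * det u v := by
  simp only [sweptArea_append, sweptArea, add_right_comm _ v u, det, Prod.fst_add, Prod.snd_add]
  ring

lemma finite_setOf_inside_pathFrom (hΔ : Δ.Finite) (p : Pt) (N : ℕ) :
    {σ : List Pt | Inside Δ (pathFrom p σ) ∧ σ.length ≤ N}.Finite := by
  have : Finite Δ := hΔ
  refine Set.Finite.of_finite_image
    (((List.finite_length_le Δ (N + 1)).image (List.map (↑))).subset ?_)
    (pathFrom_injective p).injOn
  rintro _ ⟨σ, ⟨hin, hlen⟩, rfl⟩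
  obtain ⟨L, hL⟩ : ∃ L : List Δ, L.map (↑) = pathFrom p σ :=
    ⟨(pathFrom p σ).pmap Subtype.mk fun z hz => hin z hz, by simp [List.map_pmap]⟩
  refine ⟨L, ?_, hL⟩
  have := congrArg List.length hL
  simp only [List.length_map, length_pathFrom] at this
  simpa [this] using hlen

/-- The recursion terminates: cutting a corner shortens the path, and completing a parallelogram
moves it monotonically across the finite set `Δ`. -/
theorem firstTurn_induction (hΔ : Δ.Finite) {e : ℤ} (hs : ∀ t, s t → 0 < e * t) {p : Pt}
    {motive : List Pt → Prop} (noTurn : ∀ σ, NoTurn s σ → motive σ)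
    (turn : ∀ S u v T, NoTurn s (S ++ [u]) → s (det u v) →
      Inside Δ (pathFrom p (S ++ u :: v :: T)) → motive (S ++ (u + v) :: T) →
      (Inside Δ (pathFrom p (S ++ v :: u :: T)) → motive (S ++ v :: u :: T)) →
      motive (S ++ u :: v :: T))
    {σ : List Pt} (hσ : Inside Δ (pathFrom p σ)) : motive σ := by
  let key (τ : List Pt) : ℕ ×ₗ ℤ := toLex (τ.length, e * sweptArea p τ)
  have : IsStrictOrder (List Pt) (InvImage (· < ·) key) := { }
  have hwf := (finite_setOf_inside_pathFrom hΔ p σ.length).wellFoundedOn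
    (r := InvImage (· < ·) key)
  refine hwf.induction ⟨hσ, le_rfl⟩ fun τ ⟨hτ, hlen⟩ ih => ?_
  rcases noTurn_or_exists_firstTurn s τ with h | ⟨S, u, v, T, rfl, huv, hS⟩
  · exact noTurn _ h
  refine turn S u v T hS huv hτ (ih _ ⟨inside_pathFrom_cut p S T u v hτ, ?_⟩ ?_)
    fun hin => ih _ ⟨hin, ?_⟩ ?_
  · grind
  · exact Prod.Lex.toLex_lt_toLex.2 (.inl (by simp))
  · grind
  · refine Prod.Lex.toLex_lt_toLex.2 (.inr ⟨by simp, ?_⟩)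
    have := hs _ huv
    rw [sweptArea_push, mul_sub]
    lia

lemma exists_multRel_pathFrom (hΔ : Δ.Finite) {e : ℤ} (hs : ∀ t, s t → 0 < e * t) {p : Pt}
    {σ : List Pt} (hσ : Inside Δ (pathFrom p σ)) : ∃ m, MultRel Δ Init s (pathFrom p σ) m := by
  refine firstTurn_induction (motive := fun σ => ∃ m, MultRel Δ Init s (pathFrom p σ) m) hΔ hs
    (fun σ h => ?_) (fun S u v T hS huv _ ihcut ihpush => ?_) hσ
  · by_cases hinit : Init (pathFrom p σ)
    exacts [⟨1, .init hinit⟩, ⟨0, .noTurn hinit (h.not_turnAt p)⟩]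
  · by_cases hinit : Init (pathFrom p (S ++ u :: v :: T))
    · exact ⟨1, .init hinit⟩
    have hfirst := hS.firstTurn_pathFrom (p := p) (T := T) huv
    rw [← cut_pathFrom] at ihcut
    rw [← push_pathFrom] at ihpush
    obtain ⟨m, hm⟩ := ihcut
    by_cases hin : Inside Δ (push (pathFrom p (S ++ u :: v :: T)) (S.length + 1))
    · obtain ⟨m', hm'⟩ := ihpush hin
      exact ⟨_, .stepIn hinit hfirst hin hm hm'⟩
    · exact ⟨_, .stepOut hinit hfirst hin hm⟩

/-- The multiplicity of the path from `p` with steps `σ`, with value `0` on paths that leave `Δ`;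
this convention absorbs the case distinction in the recursion. -/
def stepMult (Δ : Set Pt) (Init : List Pt → Prop) (s : ℤ → Prop) (p : Pt) (σ : List Pt) : ℕ :=
  if Inside Δ (pathFrom p σ) then multOf Δ Init s (pathFrom p σ) else 0

variable {p u v : Pt} {S T σ : List Pt}

lemma stepMult_of_multRel (hσ : Inside Δ (pathFrom p σ)) {m : ℕ}
    (h : MultRel Δ Init s (pathFrom p σ) m) : stepMult Δ Init s p σ = m := by
  rw [stepMult, if_pos hσ, h.multOf_eq]

lemma inside_of_stepMult_ne_zero (h : stepMult Δ Init s p σ ≠ 0) : Inside Δ (pathFrom p σ) :=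
  not_not.1 fun hin => h (if_neg hin)

lemma stepMult_of_init (hσ : Inside Δ (pathFrom p σ)) (h : Init (pathFrom p σ)) :
    stepMult Δ Init s p σ = 1 :=
  stepMult_of_multRel hσ (.init h)

lemma stepMult_of_noTurn (hinit : ¬Init (pathFrom p σ)) (hσ : NoTurn s σ) :
    stepMult Δ Init s p σ = 0 := by
  by_cases hin : Inside Δ (pathFrom p σ)
  · exact stepMult_of_multRel hin (.noTurn hinit (hσ.not_turnAt p))
  · exact if_neg hin

lemma stepMult_of_firstTurn (hΔ : Δ.Finite) {e : ℤ} (hs : ∀ t, s t → 0 < e * t)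
    (hin : Inside Δ (pathFrom p (S ++ u :: v :: T)))
    (hinit : ¬Init (pathFrom p (S ++ u :: v :: T))) (hS : NoTurn s (S ++ [u]))
    (huv : s (det u v)) :
    stepMult Δ Init s p (S ++ u :: v :: T) =
      (det u v).natAbs * stepMult Δ Init s p (S ++ (u + v) :: T) +
        stepMult Δ Init s p (S ++ v :: u :: T) := by
  have hfirst := hS.firstTurn_pathFrom (p := p) (T := T) huv
  have hincut := inside_pathFrom_cut p S T u v hin
  obtain ⟨m, hm⟩ := exists_multRel_pathFrom (Init := Init) hΔ hs hincut
  rw [stepMult_of_multRel hincut hm, ← triArea2_pathFrom (p := p) (S := S) (T := T)]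
  rw [← cut_pathFrom] at hm
  by_cases hpush : Inside Δ (pathFrom p (S ++ v :: u :: T))
  · obtain ⟨m', hm'⟩ := exists_multRel_pathFrom (Init := Init) hΔ hs hpush
    rw [stepMult_of_multRel hpush hm']
    rw [← push_pathFrom] at hm' hpush
    exact stepMult_of_multRel hin (.stepIn hinit hfirst hpush hm hm')
  · rw [stepMult, stepMult, if_pos hin, if_neg hpush]
    rw [← push_pathFrom] at hpush
    exact (MultRel.stepOut hinit hfirst hpush hm).multOf_eq

end Multiplicity

/-! ### Paths in the rectangle -/

/-- The `λ`-positive vectors, which are the possible steps of a `λ`-increasing path. -/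
def Pos (v : Pt) : Prop := 0 < v.1 ∨ (v.1 = 0 ∧ v.2 < 0)

lemma Pos.add {u v : Pt} (hu : Pos u) (hv : Pos v) : Pos (u + v) := by
  simp only [Pos, Prod.fst_add, Prod.snd_add] at *
  lia

lemma lamLT_add_iff {p v : Pt} : lamLT p (p + v) ↔ Pos v := by
  simp only [lamLT, Pos, Prod.fst_add, Prod.snd_add]
  lia

lemma increasing_pathFrom_iff {p : Pt} {σ : List Pt} :
    Increasing (pathFrom p σ) ↔ ∀ v ∈ σ, Pos v := by
  change List.IsChain lamLT (pathFrom p σ) ↔ _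
  induction σ generalizing p with
  | nil => exact iff_of_true (List.isChain_singleton p) (by simp)
  | cons a σ ih =>
    simp only [pathFrom, List.isChain_cons, head?_pathFrom, Option.mem_some_iff, forall_eq',
      lamLT_add_iff, ih, List.forall_mem_cons]

lemma exists_eq_pathFrom {p : Pt} {γ : List Pt} (h : γ.head? = some p) :
    ∃ σ, γ = pathFrom p σ := by
  induction γ generalizing p with
  | nil => simp at h
  | cons a γ ih =>
    obtain rfl : a = p := by simpa using h
    cases γ with
    | nil => exact ⟨[], rfl⟩
    | cons b γ =>
      obtain ⟨σ, hσ⟩ := ih (p := b) rfl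
      exact ⟨(b - a) :: σ, by simp [pathFrom, hσ]⟩

/-- `σ` is the list of steps of a `λ`-increasing path from `(0,d)` to `(c,0)` in the rectangle. -/
structure IsRectSteps (c d : ℕ) (σ : List Pt) : Prop where
  pos : ∀ v ∈ σ, Pos v
  sum : σ.sum = ((c : ℤ), -(d : ℤ))
  inside : Inside (rect c d) (pathFrom (0, d) σ)

lemma isPathRect_iff {c d : ℕ} {γ : List Pt} :
    IsPathRect c d γ ↔ ∃ σ, γ = pathFrom (0, d) σ ∧ IsRectSteps c d σ := by
  have hend (σ : List Pt) :
      ((0, (d : ℤ)) + σ.sum : Pt) = ((c : ℤ), 0) ↔ σ.sum = ((c : ℤ), -(d : ℤ)) := by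
    simp only [Prod.ext_iff, Prod.fst_add, Prod.snd_add]
    lia
  constructor
  · rintro ⟨hinc, hhead, hlast, hin⟩
    obtain ⟨σ, rfl⟩ := exists_eq_pathFrom hhead
    rw [getLast?_pathFrom, Option.some_inj, hend] at hlast
    exact ⟨σ, rfl, increasing_pathFrom_iff.1 hinc, hlast, hin⟩
  · rintro ⟨σ, rfl, hpos, hsum, hin⟩
    exact ⟨increasing_pathFrom_iff.2 hpos, head?_pathFrom _ _,
      by rw [getLast?_pathFrom, (hend σ).2 hsum], hin⟩

lemma finite_rect (c d : ℕ) : (rect c d).Finite :=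
  (Set.finite_Icc ((0, 0) : Pt) (c, d)).subset fun _ ⟨hx, hxc, hy, hyd⟩ => ⟨⟨hx, hy⟩, ⟨hxc, hyd⟩⟩

namespace IsRectSteps

variable {c d : ℕ} {S T σ : List Pt} {u v : Pt}

lemma mem_rect (h : IsRectSteps c d (S ++ T)) : (0, (d : ℤ)) + S.sum ∈ rect c d :=
  (inside_pathFrom_iff _ _).1 h.inside S T rfl

lemma snd_last_nonpos (h : IsRectSteps c d (S ++ [u])) : u.2 ≤ 0 := by
  have hS := h.mem_rect.2.2.1
  have hsum := congrArg Prod.snd h.sum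
  simp only [List.sum_append, List.sum_singleton, Prod.snd_add] at hS hsum
  lia

lemma cut (h : IsRectSteps c d (S ++ u :: v :: T)) : IsRectSteps c d (S ++ (u + v) :: T) where
  pos := by
    have hpos := h.pos
    simp only [List.forall_mem_append, List.forall_mem_cons] at hpos ⊢
    exact ⟨hpos.1, hpos.2.1.add hpos.2.2.1, hpos.2.2.2⟩
  sum := by simpa [add_assoc] using h.sum
  inside := inside_pathFrom_cut _ _ _ _ _ h.inside

lemma push_of_inside (h : IsRectSteps c d (S ++ u :: v :: T))
    (hin : Inside (rect c d) (pathFrom (0, d) (S ++ v :: u :: T))) :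
    IsRectSteps c d (S ++ v :: u :: T) where
  pos w hw := h.pos w (((List.Perm.swap u v T).append_left S).mem_iff.1 hw)
  sum := by simpa [add_left_comm] using h.sum
  inside := hin

lemma push (h : IsRectSteps c d (S ++ u :: v :: T)) (hv : (0, (d : ℤ)) + S.sum + v ∈ rect c d) :
    IsRectSteps c d (S ++ v :: u :: T) :=
  h.push_of_inside (inside_pathFrom_push _ _ _ _ _ h.inside hv)

variable {Init : List Pt → Prop} {s : ℤ → Prop} {e : ℤ}

theorem stepMult_induction (hs : ∀ t, s t → 0 < e * t) {motive : List Pt → ℕ → Prop}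
    (init : ∀ σ, IsRectSteps c d σ → Init (pathFrom (0, d) σ) → motive σ 1)
    (noTurn : ∀ σ, IsRectSteps c d σ → ¬Init (pathFrom (0, d) σ) → NoTurn s σ → motive σ 0)
    (turn : ∀ S u v T, IsRectSteps c d (S ++ u :: v :: T) → NoTurn s (S ++ [u]) → s (det u v) →
      motive (S ++ (u + v) :: T) (stepMult (rect c d) Init s (0, d) (S ++ (u + v) :: T)) →
      (IsRectSteps c d (S ++ v :: u :: T) →
        motive (S ++ v :: u :: T) (stepMult (rect c d) Init s (0, d) (S ++ v :: u :: T))) →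
      motive (S ++ u :: v :: T)
        ((det u v).natAbs * stepMult (rect c d) Init s (0, d) (S ++ (u + v) :: T) +
          stepMult (rect c d) Init s (0, d) (S ++ v :: u :: T)))
    (hσ : IsRectSteps c d σ) : motive σ (stepMult (rect c d) Init s (0, d) σ) := by
  refine firstTurn_induction (motive := fun σ => IsRectSteps c d σ →
      motive σ (stepMult (rect c d) Init s (0, d) σ)) (finite_rect c d) hs
    (fun σ hturn hσ => ?_) (fun S u v T hS huv hin ihcut ihpush hσ => ?_) hσ.inside hσ
  · by_cases hinit : Init (pathFrom (0, d) σ)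
    · rw [stepMult_of_init hσ.inside hinit]
      exact init σ hσ hinit
    · rw [stepMult_of_noTurn hinit hturn]
      exact noTurn σ hσ hinit hturn
  · by_cases hinit : Init (pathFrom (0, d) (S ++ u :: v :: T))
    · rw [stepMult_of_init hin hinit]
      exact init _ hσ hinit
    · rw [stepMult_of_firstTurn (finite_rect c d) hs hin hinit hS huv]
      exact turn S u v T hσ hS huv (ihcut hσ.cut) fun h => ihpush h.inside h

theorem stepMult_ne_zero_induction (hs : ∀ t, s t → 0 < e * t) {motive : List Pt → Prop}
    (init : ∀ σ, IsRectSteps c d σ → Init (pathFrom (0, d) σ) → motive σ)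
    (cut : ∀ S u v T, IsRectSteps c d (S ++ u :: v :: T) → s (det u v) →
      motive (S ++ (u + v) :: T) → motive (S ++ u :: v :: T))
    (push : ∀ S u v T, IsRectSteps c d (S ++ u :: v :: T) → IsRectSteps c d (S ++ v :: u :: T) →
      NoTurn s (S ++ [u]) → s (det u v) → motive (S ++ v :: u :: T) → motive (S ++ u :: v :: T))
    (hσ : IsRectSteps c d σ) (hm : stepMult (rect c d) Init s (0, d) σ ≠ 0) : motive σ := by
  refine stepMult_induction (motive := fun σ m => m ≠ 0 → motive σ) hs
    (fun σ hσ hinit _ => init σ hσ hinit) (fun σ _ _ _ h => absurd rfl h)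
    (fun S u v T hσ hturn huv ihcut ihpush hm => ?_) hσ hm
  by_cases hcut : stepMult (rect c d) Init s (0, d) (S ++ (u + v) :: T) = 0
  · have hpush : stepMult (rect c d) Init s (0, d) (S ++ v :: u :: T) ≠ 0 := by
      simpa [hcut] using hm
    have hσ' := hσ.push_of_inside (inside_of_stepMult_ne_zero hpush)
    exact push S u v T hσ hσ' hturn huv (ihpush hσ' hpush)
  · exact cut S u v T hσ huv (ihcut hcut)

end IsRectSteps

/-! ### Down steps -/

/-- The sizes of the vertical steps of `σ`, which for `λ`-increasing paths all point down. -/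
def downSizes (σ : List Pt) : Multiset ℕ := ((σ.filter (·.1 = 0)).map (·.2.natAbs) : List ℕ)

section DownSizes

variable {S T σ τ : List Pt} {u v : Pt}

lemma downSizes_nil : downSizes [] = 0 := rfl

lemma downSizes_append : downSizes (S ++ T) = downSizes S + downSizes T := by
  simp [downSizes]

lemma downSizes_cons_of_eq (h : v.1 = 0) : downSizes (v :: σ) = v.2.natAbs ::ₘ downSizes σ := by
  simp [downSizes, h]

lemma downSizes_cons_of_ne (h : v.1 ≠ 0) : downSizes (v :: σ) = downSizes σ := by
  simp [downSizes, h]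

lemma downSizes_down (b : ℕ) : downSizes ((0, -b) :: σ) = b ::ₘ downSizes σ := by
  simp [downSizes]

lemma downSizes_eq_zero (h : ∀ v ∈ σ, v.1 ≠ 0) : downSizes σ = 0 := by
  simpa [downSizes, List.filter_eq_nil_iff] using h

lemma downSizes_eq_of_perm (h : σ.Perm τ) : downSizes σ = downSizes τ :=
  Multiset.coe_eq_coe.2 ((h.filter _).map _)

lemma downSizes_swap : downSizes (S ++ v :: u :: T) = downSizes (S ++ u :: v :: T) :=
  downSizes_eq_of_perm ((List.Perm.swap u v T).append_left S)

end DownSizes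

/-! ### Runs -/

/-- The machine that recognises the paths of positive `mult₊`: it keeps a stock of down step sizes,
a down step adds its size to the stock, and any other step is `(1, h)` with `h` the total of a
submultiset that it takes out of the stock.  `Run σ P Q` says that `σ` can turn the stock `P`
into `Q`. -/
def Run : List Pt → Multiset ℕ → Multiset ℕ → Prop
  | [], P, Q => P = Q
  | v :: σ, P, Q =>
    (∃ b : ℕ, 0 < b ∧ v = (0, -(b : ℤ)) ∧ Run σ (b ::ₘ P) Q) ∨
    (∃ M P' : Multiset ℕ, P = M + P' ∧ v = (1, (M.sum : ℤ)) ∧ Run σ P' Q)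

/-- Distinct submultisets have distinct sums; the genericity condition for a multiset. -/
structure HasDistinctSubsums (X : Multiset ℕ) : Prop where
  nodup : X.Nodup
  eq_of_sum_eq : ∀ M N, M ≤ X → N ≤ X → M.sum = N.sum → M = N

section Run

variable {S T α : List Pt} {P Q R X : Multiset ℕ} {u v : Pt}

lemma run_append : Run (S ++ T) P R ↔ ∃ Q, Run S P Q ∧ Run T Q R := by
  induction S generalizing P with
  | nil => simp [Run]
  | cons a S ih =>
    simp only [List.cons_append, Run, ih]
    grind

lemma run_replicate (k : ℕ) (P : Multiset ℕ) : Run (List.replicate k (1, 0)) P P := by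
  induction k with
  | zero => rfl
  | succ k ih => exact .inr ⟨0, P, (zero_add P).symm, rfl, ih⟩

lemma Run.le_add_downSizes (h : Run S P Q) : Q ≤ P + downSizes S := by
  induction S generalizing P with
  | nil => exact h.symm.le.trans (Multiset.le_add_right _ _)
  | cons a S ih =>
    rcases h with ⟨b, -, rfl, h⟩ | ⟨M, P', rfl, rfl, h⟩
    · rw [downSizes_down, Multiset.add_cons, ← Multiset.cons_add]
      exact ih h
    · rw [downSizes_cons_of_ne one_ne_zero, add_assoc]
      exact (ih h).trans (Multiset.le_add_left _ _)

lemma Run.sum_eq (h : Run S P Q) : (Q.sum : ℤ) = P.sum - S.sum.2 := by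
  induction S generalizing P with
  | nil => simp [show P = Q from h]
  | cons a S ih =>
    rcases h with ⟨b, -, rfl, h⟩ | ⟨M, P', rfl, rfl, h⟩ <;>
    · rw [ih h]
      push_cast [Multiset.sum_cons, Multiset.sum_add, List.sum_cons, Prod.snd_add]
      ring

lemma Run.down_or_up (h : Run S P Q) :
    ∀ v ∈ S, (v.1 = 0 ∧ v.2 < 0) ∨ (v.1 = 1 ∧ 0 ≤ v.2) := by
  induction S generalizing P with
  | nil => simp
  | cons a S ih =>
    rw [List.forall_mem_cons]
    rcases h with ⟨b, hb, rfl, h⟩ | ⟨M, P', rfl, rfl, h⟩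
    · exact ⟨.inl ⟨rfl, by simpa using hb⟩, ih h⟩
    · exact ⟨.inr ⟨rfl, Nat.cast_nonneg _⟩, ih h⟩

lemma Run.pos (h : Run S P Q) : ∀ v ∈ S, Pos v := fun v hv => by
  have := h.down_or_up v hv
  simp only [Pos]
  lia

lemma Run.eq_of_run (hX : HasDistinctSubsums X) {Q' : Multiset ℕ} (h : Run S P Q)
    (h' : Run S P Q') (hle : P + downSizes S ≤ X) : Q = Q' := by
  induction S generalizing P with
  | nil => exact Eq.trans (Eq.symm h) h'
  | cons a S ih =>
    rcases h with ⟨b, -, rfl, h⟩ | ⟨M, P₁, rfl, rfl, h⟩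
    · rcases h' with ⟨b', -, hb, h'⟩ | ⟨M', P₂, -, hM, -⟩
      · obtain rfl : b = b' := by simpa using hb
        rw [downSizes_down, Multiset.add_cons, ← Multiset.cons_add] at hle
        exact ih h h' hle
      · simp at hM
    · rcases h' with ⟨b', -, hb, -⟩ | ⟨M', P₂, hP, hM, h'⟩
      · simp at hb
      · rw [downSizes_cons_of_ne one_ne_zero] at hle
        have hM_le : M ≤ X := (Multiset.le_add_right _ _).trans
          ((Multiset.le_add_right _ _).trans hle)
        have hM'_le : M' ≤ X := (Multiset.le_add_right _ _).trans
          (hP.symm.le.trans ((Multiset.le_add_right _ _).trans hle))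
        obtain rfl := hX.eq_of_sum_eq M M' hM_le hM'_le
          (by simpa [-Nat.cast_multiset_sum] using hM)
        obtain rfl := add_left_cancel hP
        rw [add_assoc] at hle
        exact ih h h' ((Multiset.le_add_left _ _).trans hle)

lemma Run.of_run_append (hX : HasDistinctSubsums X) (h : Run (S ++ T) P R) (hS : Run S P Q)
    (hle : P + downSizes S ≤ X) : Run T Q R := by
  obtain ⟨Q', hS', hT⟩ := run_append.1 h
  rwa [hS.eq_of_run hX hS' hle]

lemma Run.of_cut (hu : Pos u) (hv : Pos v) (huv : 0 < det u v) (h : Run ((u + v) :: T) P Q) :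
    Run (u :: v :: T) P Q := by
  obtain ⟨u₁, u₂⟩ := u
  obtain ⟨v₁, v₂⟩ := v
  simp only [Pos, det] at hu hv huv
  rcases h with ⟨b, -, he, -⟩ | ⟨M, P', rfl, he, h⟩ <;>
    simp only [Prod.mk_add_mk, Prod.mk.injEq] at he
  · obtain ⟨rfl, rfl⟩ : u₁ = 0 ∧ v₁ = 0 := by lia
    simp at huv
  · obtain ⟨rfl, rfl⟩ | ⟨rfl, rfl⟩ : u₁ = 0 ∧ v₁ = 1 ∨ u₁ = 1 ∧ v₁ = 0 := by lia
    · lift -u₂ to ℕ using by lia with b hb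
      obtain rfl : u₂ = -b := by lia
      exact .inl ⟨b, by lia, rfl, .inr ⟨b ::ₘ M, P', by simp,
        by rw [Multiset.sum_cons, Prod.mk.injEq]; lia, h⟩⟩
    · lia

lemma Run.of_push (huv : 0 < det u v) (h : Run (v :: u :: T) P Q) : Run (u :: v :: T) P Q := by
  rcases h with ⟨b, hb, rfl, ⟨b', -, rfl, -⟩ | ⟨M, P', -, rfl, -⟩⟩ |
    ⟨M, P', rfl, rfl, ⟨b, hb, rfl, h⟩ | ⟨M', P'', rfl, rfl, h⟩⟩
  · simp [det] at huv
  · simp [det] at huv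
    lia
  · exact .inl ⟨b, hb, rfl, .inr ⟨M, b ::ₘ P', by simp, rfl, h⟩⟩
  · exact .inr ⟨M', M + P'', add_left_comm _ _ _, rfl, .inr ⟨M, P'', rfl, rfl, h⟩⟩

lemma Run.exists_sum_eq {k : ℤ} (h : Run ((1, k) :: T) P Q) : ∃ N ≤ P, k = N.sum := by
  rcases h with ⟨b, -, he, -⟩ | ⟨N, P', rfl, he, -⟩
  · simp at he
  · exact ⟨N, Multiset.le_add_right _ _, (Prod.mk.inj he).2⟩

/-- At a left turn of a run exactly one of the two branches of the recursion leads to runs: cutting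
if the up step `v` takes back what the down step `u` has just put into the stock, completing the
parallelogram otherwise. -/
theorem Run.cut_or_push (hX : HasDistinctSubsums X) (h : Run (u :: v :: T) P R)
    (hle : P + downSizes (u :: v :: T) ≤ X) (huv : 0 < det u v) :
    (∃ b : ℕ, u = (0, -(b : ℤ)) ∧ v.1 = 1 ∧ Run ((u + v) :: T) P R ∧ ∀ Q, ¬Run [v] P Q) ∨
      (Run (v :: u :: T) P R ∧ ∀ Q, ¬Run [u + v] P Q) := by
  rcases h with ⟨b, hb, rfl, ⟨b', -, rfl, -⟩ | ⟨M, P', hP, rfl, h⟩⟩ |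
    ⟨M, P', rfl, rfl, ⟨b, hb, rfl, -⟩ | ⟨M', P'', rfl, rfl, h⟩⟩
  · simp [det] at huv
  · have hbP : b ::ₘ P ≤ X := by
      rw [downSizes_down, Multiset.add_cons, ← Multiset.cons_add] at hle
      exact (Multiset.le_add_right _ _).trans hle
    have hM : M ≤ X := ((Multiset.le_add_right M P').trans hP.ge).trans hbP
    by_cases hbM : b ∈ M
    · obtain ⟨M, rfl⟩ := Multiset.exists_cons_of_mem hbM
      obtain rfl : P = M + P' := by simpa using hP
      refine .inl ⟨b, rfl, rfl, .inr ⟨M, P', rfl, by simp, h⟩, fun Q hQ => ?_⟩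
      obtain ⟨N, hN, he⟩ := hQ.exists_sum_eq
      have hNM : N = b ::ₘ M := hX.eq_of_sum_eq N (b ::ₘ M)
        ((hN.trans (Multiset.le_cons_self _ b)).trans hbP) hM (by exact_mod_cast he.symm)
      have hb_mem : b ∈ M + P' := Multiset.mem_of_le hN (by simp [hNM])
      exact (Multiset.nodup_cons.1 (Multiset.nodup_of_le hbP hX.nodup)).1 hb_mem
    · have hbP' : b ∈ P' := (Multiset.mem_add.1 (hP ▸ Multiset.mem_cons_self b P)).resolve_left hbM
      obtain ⟨P', rfl⟩ := Multiset.exists_cons_of_mem hbP'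
      obtain rfl : P = M + P' := by simpa using hP
      refine .inr ⟨.inr ⟨M, P', rfl, rfl, .inl ⟨b, hb, rfl, h⟩⟩, fun Q hQ => hbM ?_⟩
      obtain ⟨N, hN, he⟩ := hQ.exists_sum_eq
      rw [← hX.eq_of_sum_eq (b ::ₘ N) M ((Multiset.cons_le_cons b hN).trans hbP) hM
        (by simp only [Multiset.sum_cons]; lia)]
      exact Multiset.mem_cons_self b N
  · simp only [det] at huv
    lia
  · refine .inr ⟨.inr ⟨M', M + P'', add_left_comm _ _ _, rfl, .inr ⟨M, P'', rfl, rfl, h⟩⟩, ?_⟩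
    rintro Q (⟨b, -, he, -⟩ | ⟨N, P', -, he, -⟩) <;> simp at he

lemma Run.le_of_noTurn {b : ℕ} (h : Run S P Q) (hturn : NoTurn (0 < ·) ((0, -b) :: S))
    (hb : 0 < b) : P ≤ Q := by
  induction S generalizing P b with
  | nil => exact Eq.le h
  | cons a S ih =>
    rw [NoTurn, List.isChain_cons_cons] at hturn
    rcases h with ⟨b', hb', rfl, h⟩ | ⟨M, P', rfl, rfl, -⟩
    · exact (Multiset.le_cons_self P b').trans (ih h hturn.2 hb')
    · exact absurd hb (by simpa [det] using hturn.1)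

lemma Run.eq_replicate_of_noTurn (h : Run S 0 0) (hturn : NoTurn (0 < ·) S) :
    S = List.replicate S.length (1, 0) := by
  induction S with
  | nil => rfl
  | cons a S ih =>
    rcases h with ⟨b, hb, rfl, h⟩ | ⟨M, P', hP, rfl, h⟩
    · simpa using h.le_of_noTurn hturn hb
    · obtain ⟨rfl, rfl⟩ : M = 0 ∧ P' = 0 := by simpa using hP.symm
      rw [List.length_cons, List.replicate_succ, ← ih h hturn.tail]
      simp

end Run

/-! ### Positive multiplicities -/

section PlusMult

variable {c d : ℕ} {S T σ α : List Pt} {P X : Multiset ℕ} {u v w : Pt}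

lemma sum_le_sum_of_le {M N : Multiset ℕ} (h : M ≤ N) : M.sum ≤ N.sum := by
  obtain ⟨K, rfl⟩ := Multiset.le_iff_exists_add.1 h
  simp

lemma sum_fst_nonneg (h : ∀ v ∈ S, Pos v) : 0 ≤ S.sum.1 := by
  induction S with
  | nil => rfl
  | cons a S ih =>
    rw [List.forall_mem_cons] at h
    have ha := h.1
    simp only [Pos] at ha
    exact add_nonneg (show 0 ≤ a.1 by lia) (ih h.2)

lemma last_or_of_append_cons_cons_eq (h : S ++ u :: v :: T = α ++ [w]) :
    (T = [] ∧ v = w ∧ α = S ++ [u]) ∨ ∃ T', T = T' ++ [w] ∧ α = S ++ u :: v :: T' := by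
  rcases T.eq_nil_or_concat with rfl | ⟨T', w', rfl⟩
  · obtain ⟨h₁, h₂⟩ : S ++ [u] = α ∧ [v] = [w] := List.append_inj' (by simpa using h) rfl
    exact .inl ⟨rfl, by simpa using h₂, h₁.symm⟩
  · obtain ⟨h₁, h₂⟩ : S ++ u :: v :: T' = α ∧ [w'] = [w] :=
      List.append_inj' (by simpa using h) rfl
    obtain rfl : w' = w := by simpa using h₂
    exact .inr ⟨T', by simp, h₁.symm⟩

lemma Run.isRectSteps (h : Run α 0 0) (hle : (downSizes α).sum ≤ d) (hd : 0 < d)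
    (hc : α.sum.1 = c) : IsRectSteps c d (α ++ [(0, -(d : ℤ))]) := by
  have hsum : α.sum.2 = 0 := by simpa using h.sum_eq
  have hend : (α ++ [(0, -(d : ℤ))]).sum = ((c : ℤ), -(d : ℤ)) := by
    simp [Prod.ext_iff, hsum, hc]
  refine ⟨?_, hend, (inside_pathFrom_iff _ _).2 fun S T hST => ?_⟩
  · simp only [List.forall_mem_append, List.forall_mem_singleton]
    exact ⟨h.pos, .inr ⟨rfl, by simpa using hd⟩⟩
  rcases T.eq_nil_or_concat with rfl | ⟨T, w, rfl⟩
  · rw [← S.append_nil, ← hST, hend]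
    simp [rect]
  · obtain rfl : α = S ++ T := by
      rw [List.concat_eq_append, ← List.append_assoc] at hST
      exact (List.append_inj' hST rfl).1
    obtain ⟨Q, hS, hT⟩ := run_append.1 h
    have hQ : Q.sum ≤ d := by
      refine le_trans ?_ hle
      rw [downSizes_append, Multiset.sum_add, ← zero_add (downSizes S)]
      exact (sum_le_sum_of_le hS.le_add_downSizes).trans (Nat.le_add_right _ _)
    have hQ_eq := hS.sum_eq
    have hS_nonneg := sum_fst_nonneg hS.pos
    have hT_nonneg := sum_fst_nonneg hT.pos
    simp only [rect, Set.mem_ofPred_eq, Prod.fst_add, Prod.snd_add, List.sum_append,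
      Multiset.sum_zero] at *
    lia

/-- `mult₊` in terms of steps, for the boundary data `μ₂ = (1,…,1)` and `ν₂ = (d)`. -/
abbrev plusMult (c d : ℕ) : List Pt → ℕ :=
  stepMult (rect c d) (InitPlusRect d (Multiset.replicate c 1) {d}) (fun t => 0 < t) (0, d)

lemma hSteps_eq_map (l : List ℕ) : hSteps l = l.map fun k : ℕ => ((k : ℤ), (0 : ℤ)) := by
  -- in the definition the coercion acts on the list `l`, not on its elements
  induction l with
  | nil => rfl
  | cons k l ih => simpa [hSteps] using ih

lemma dSteps_eq_map (l : List ℕ) : dSteps l = l.map fun k : ℕ => ((0 : ℤ), -(k : ℤ)) := by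
  induction l with
  | nil => rfl
  | cons k l ih => simpa [dSteps] using ih

lemma initPlusRect_pathFrom_iff :
    InitPlusRect d (Multiset.replicate c 1) {d} (pathFrom (0, d) σ) ↔
      σ = List.replicate c (1, 0) ++ [(0, -(d : ℤ))] := by
  simp only [InitPlusRect, (pathFrom_injective _).eq_iff, ← Multiset.coe_replicate,
    ← Multiset.coe_singleton, Multiset.coe_eq_coe, List.perm_replicate, List.perm_singleton]
  constructor
  · rintro ⟨_, _, rfl, rfl, rfl⟩
    simp [hSteps_eq_map, dSteps_eq_map]
  · rintro rfl
    exact ⟨_, _, rfl, rfl, by simp [hSteps_eq_map, dSteps_eq_map]⟩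

theorem run_of_plusMult_ne_zero (hσ : IsRectSteps c d σ) (hm : plusMult c d σ ≠ 0) :
    Run σ 0 {d} := by
  refine hσ.stepMult_ne_zero_induction (e := 1) (motive := (Run · 0 {d})) (by simp)
    (fun σ hσ hinit => ?_) (fun S u v T hσ huv ih => ?_) (fun S u v T _ _ _ huv ih => ?_) hm
  · obtain rfl := initPlusRect_pathFrom_iff.1 hinit
    have hd : 0 < d := by simpa [Pos] using hσ.pos (0, -d) (by simp)
    exact run_append.2 ⟨0, run_replicate c 0, .inl ⟨d, hd, rfl, rfl⟩⟩
  · obtain ⟨Q, hS, hT⟩ := run_append.1 ih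
    exact run_append.2 ⟨Q, hS, hT.of_cut (hσ.pos u (by simp)) (hσ.pos v (by simp)) huv⟩
  · obtain ⟨Q, hS, hT⟩ := run_append.1 ih
    exact run_append.2 ⟨Q, hS, hT.of_push huv⟩

lemma plusMult_eq_zero_of_not_run (hX : HasDistinctSubsums X) (hσ : IsRectSteps c d (S ++ w :: T))
    (hS : Run S 0 P) (hle : downSizes S ≤ X) (hw : ∀ Q, ¬Run [w] P Q) :
    plusMult c d (S ++ w :: T) = 0 := by
  by_contra hm
  have hrun : Run (w :: T) P {d} :=
    (run_of_plusMult_ne_zero hσ hm).of_run_append hX hS (by simpa using hle)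
  obtain ⟨Q, hQ, -⟩ := (run_append (S := [w])).1 hrun
  exact hw Q hQ

lemma Run.cut_or_push_plusMult (hX : HasDistinctSubsums X)
    (hσ : IsRectSteps c d (S ++ u :: v :: (T ++ [w]))) (h : Run (S ++ u :: v :: T) 0 P)
    (hle : downSizes (S ++ u :: v :: T) ≤ X) (huv : 0 < det u v) :
    (∃ b : ℕ, u = (0, -(b : ℤ)) ∧ v.1 = 1 ∧ Run (S ++ (u + v) :: T) 0 P ∧
        plusMult c d (S ++ v :: u :: (T ++ [w])) = 0) ∨
      (Run (S ++ v :: u :: T) 0 P ∧ plusMult c d (S ++ (u + v) :: (T ++ [w])) = 0) := by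
  obtain ⟨Q, hS, hrest⟩ := run_append.1 h
  rw [downSizes_append] at hle
  have hSX : downSizes S ≤ X := (Multiset.le_add_right _ _).trans hle
  have hQ : Q + downSizes (u :: v :: T) ≤ X :=
    (add_le_add_left (by simpa using hS.le_add_downSizes) _).trans hle
  rcases hrest.cut_or_push hX hQ huv with ⟨b, hu, hv, hcut, hnot⟩ | ⟨hpush, hnot⟩
  · refine .inl ⟨b, hu, hv, run_append.2 ⟨Q, hS, hcut⟩, ?_⟩
    by_contra hm
    have hσ' := hσ.push_of_inside (inside_of_stepMult_ne_zero hm)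
    exact hm (plusMult_eq_zero_of_not_run hX hσ' hS hSX hnot)
  · exact .inr ⟨run_append.2 ⟨Q, hS, hpush⟩, plusMult_eq_zero_of_not_run hX hσ.cut hS hSX hnot⟩

theorem plusMult_eq_prod_downSizes (hX : HasDistinctSubsums X) (hXd : X.sum ≤ d)
    (hσ : IsRectSteps c d (α ++ [(0, -(d : ℤ))])) (hα : Run α 0 0) (hle : downSizes α ≤ X) :
    plusMult c d (α ++ [(0, -(d : ℤ))]) = (downSizes α).prod := by
  refine hσ.stepMult_induction (e := 1) (motive := fun σ m => ∀ α, σ = α ++ [(0, -(d : ℤ))] →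
    Run α 0 0 → downSizes α ≤ X → m = (downSizes α).prod) (by simp) ?_ ?_ ?_ α rfl hα hle
  · rintro _ - hinit α rfl - -
    obtain rfl := List.append_cancel_right (initPlusRect_pathFrom_iff.1 hinit)
    rw [downSizes_eq_zero (by simp), Multiset.prod_zero]
  · rintro _ hσ hinit hturn α rfl hα -
    have hrep := hα.eq_replicate_of_noTurn hturn.left_of_append
    have hlen : α.length = c := by
      have := congrArg Prod.fst hσ.sum
      rw [hrep] at this
      simpa using this
    exact absurd (initPlusRect_pathFrom_iff.2 (by rw [hrep, hlen])) hinit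
  · intro S u v T hσ _ huv ihcut ihpush α hST hα hle
    change _ * plusMult c d _ + plusMult c d _ = _
    rcases last_or_of_append_cons_cons_eq hST with ⟨rfl, rfl, rfl⟩ | ⟨T, rfl, rfl⟩
    · have hu := hσ.pos u (by simp)
      simp only [Pos, det] at hu huv
      have : 0 ≤ u.1 * d := mul_nonneg (by lia) (Nat.cast_nonneg d)
      lia
    rcases hα.cut_or_push_plusMult hX hσ hle huv with ⟨b, rfl, hv, hcut, hm⟩ | ⟨hpush, hm⟩
    · have hsizes : downSizes (S ++ (0, -(b : ℤ)) :: v :: T) =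
          b ::ₘ downSizes (S ++ ((0, -(b : ℤ)) + v) :: T) := by
        simp [downSizes, hv]
      have hcut_eq : plusMult c d _ = _ :=
        ihcut _ (by simp) hcut ((Multiset.le_cons_self _ b).trans (hsizes ▸ hle))
      rw [hm, hcut_eq, hsizes]
      simp [det, hv]
    · have hsizes : downSizes (S ++ v :: u :: T) = downSizes (S ++ u :: v :: T) := downSizes_swap
      have hd : 0 < d := by simpa [Pos] using hσ.pos (0, -d) (by simp)
      have hc : (S ++ v :: u :: T).sum.1 = c := by
        simpa [add_left_comm] using congrArg Prod.fst hσ.sum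
      have hσ' := hpush.isRectSteps ((sum_le_sum_of_le (hsizes ▸ hle)).trans hXd) hd hc
      rw [hm, mul_zero, zero_add, ← hsizes]
      exact ihpush (by simpa using hσ') _ (by simp) hpush (hsizes ▸ hle)

end PlusMult

/-! ### Negative multiplicities -/

section AreaProd

variable {R R' : Type*} [CommRing R] [CommRing R']

/-- The product of the determinants `det (z - v₁ - ⋯ - vᵢ₋₁) vᵢ` of a list of vectors
`v₁, …, vₖ`. If `z = v₁ + ⋯ + vₖ + w`, these are the doubled areas of the triangles cut off when
`vₖ, …, v₁` are successively absorbed into the last step `w`. -/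
def areaProd : R × R → List (R × R) → R
  | _, [] => 1
  | z, v :: σ => (z.1 * v.2 - z.2 * v.1) * areaProd (z - v) σ

lemma areaProd_append (z : R × R) (S T : List (R × R)) :
    areaProd z (S ++ T) = areaProd z S * areaProd (z - S.sum) T := by
  induction S generalizing z with
  | nil => simp [areaProd]
  | cons v S ih => simp [areaProd, ih, mul_assoc, sub_sub]

lemma areaProd_swap (z u v : R × R) (T : List (R × R)) :
    areaProd z (u :: v :: T) =
      (v.1 * u.2 - v.2 * u.1) * areaProd z ((u + v) :: T) + areaProd z (v :: u :: T) := by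
  simp only [areaProd, ← sub_sub, Prod.fst_sub, Prod.snd_sub, Prod.fst_add, Prod.snd_add,
    sub_right_comm z v u]
  ring

lemma map_areaProd (f : R →+* R') (z : R × R) (σ : List (R × R)) :
    f (areaProd z σ) = areaProd (Prod.map f f z) (σ.map (Prod.map f f)) := by
  induction σ generalizing z with
  | nil => simp [areaProd]
  | cons v σ ih =>
    simp only [areaProd, map_mul, map_sub, ih, List.map_cons]
    congr 2
    simp [Prod.ext_iff]

end AreaProd

section MinusMult

variable {c d : ℕ} {S T σ τ α : List Pt} {X : Multiset ℕ} {u v w : Pt}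

lemma sum_snd_nonneg (h : ∀ v ∈ S, 0 ≤ v.2) : 0 ≤ S.sum.2 := by
  rw [show S.sum.2 = (S.map Prod.snd).sum from map_list_sum (AddMonoidHom.snd ℤ ℤ) S]
  simpa using List.sum_le_sum (f := fun _ => 0) (g := Prod.snd) h

lemma sum_snd_nonpos (h : ∀ v ∈ S, v.2 ≤ 0) : S.sum.2 ≤ 0 := by
  rw [show S.sum.2 = (S.map Prod.snd).sum from map_list_sum (AddMonoidHom.snd ℤ ℤ) S]
  simpa using List.sum_le_sum (f := Prod.snd) (g := fun _ => 0) h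

lemma sum_snd_neg (h : ∀ v ∈ S, v.2 ≤ 0) (hne : ∃ v ∈ S, v.2 ≠ 0) : S.sum.2 < 0 := by
  rw [show S.sum.2 = (S.map Prod.snd).sum from map_list_sum (AddMonoidHom.snd ℤ ℤ) S]
  obtain ⟨v, hv, hv0⟩ := hne
  simpa using List.sum_lt_sum Prod.snd (fun _ => 0) h ⟨v, hv, (h v hv).lt_of_ne hv0⟩

lemma det_nonneg_trans (hu : Pos u) (hv : Pos v) (hw : Pos w) (huv : 0 ≤ det u v)
    (hvw : 0 ≤ det v w) : 0 ≤ det u w := by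
  simp only [Pos, det] at *
  have hu₁ : 0 ≤ u.1 := by lia
  have hw₁ : 0 ≤ w.1 := by lia
  rcases hv with hv | ⟨hv₁, hv₂⟩
  · refine nonneg_of_mul_nonneg_right (a := v.1) ?_ hv
    linear_combination u.1 * hvw + w.1 * huv
  · have hu₁' : u.1 ≤ 0 := by
      rw [hv₁, mul_zero, sub_zero] at huv
      exact nonpos_of_mul_nonneg_left huv hv₂
    have := mul_nonneg (neg_nonneg.2 (show u.2 ≤ 0 by lia)) hw₁
    rw [show u.1 = 0 by lia]
    lia

lemma det_nonneg_of_noTurn (hpos : ∀ v ∈ S ++ [w], Pos v) (h : NoTurn (· < 0) (S ++ [w])) :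
    ∀ v ∈ S, 0 ≤ det v w := by
  induction S with
  | nil => simp
  | cons a S ih =>
    simp only [List.cons_append, List.forall_mem_cons] at hpos
    have hS := ih hpos.2 (List.IsChain.tail h)
    refine List.forall_mem_cons.2 ⟨?_, hS⟩
    rcases S with - | ⟨b, S⟩
    · exact not_lt.1 (List.isChain_cons_cons.1 h).1
    · exact det_nonneg_trans hpos.1 (hpos.2 b (by simp)) (hpos.2 w (by simp))
        (not_lt.1 (List.isChain_cons_cons.1 h).1) (hS b (by simp))

lemma snd_nonpos_of_noTurn (hpos : ∀ v ∈ S ++ [w], Pos v) (h : NoTurn (· < 0) (S ++ [w]))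
    (hw : w.2 ≤ 0) : ∀ v ∈ S ++ [w], v.2 ≤ 0 := by
  simp only [List.forall_mem_append, List.forall_mem_singleton]
  refine ⟨fun v hv => ?_, hw⟩
  have hdet := det_nonneg_of_noTurn hpos h v hv
  have hv_pos := hpos v (by simp [hv])
  have hw_pos := hpos w (by simp)
  simp only [Pos, det] at *
  by_contra! hv₂
  have hv₁ : 0 < v.1 := by lia
  rcases hw_pos with hw₁ | ⟨hw₁, hw₂⟩
  · linarith [mul_pos hv₂ hw₁, mul_nonneg hv₁.le (neg_nonneg.2 hw)]
  · rw [hw₁] at hdet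
    linarith [mul_pos hv₁ (neg_pos.2 hw₂)]

lemma fst_pos_of_det_neg (hu : Pos u) (hv : Pos v) (huv : det u v < 0) : 0 < u.1 := by
  simp only [Pos, det] at *
  rcases hu with hu₁ | ⟨hu₁, hu₂⟩
  · exact hu₁
  · rw [hu₁] at huv
    have := mul_nonneg (neg_nonneg.2 hu₂.le) (show 0 ≤ v.1 by lia)
    lia

lemma fst_add_pos_of_det_neg (hu : Pos u) (hv : Pos v) (huv : det u v < 0) : 0 < (u + v).1 := by
  have hu₁ := fst_pos_of_det_neg hu hv huv
  simp only [Pos, Prod.fst_add] at *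
  lia

lemma downSizes_cut (h : (u + v).1 ≠ 0) :
    downSizes (S ++ u :: v :: T) = downSizes (S ++ (u + v) :: T) + downSizes [u, v] := by
  rw [show u :: v :: T = [u, v] ++ T from rfl]
  simp only [downSizes_append, downSizes_cons_of_ne h]
  abel

/-- `mult₋` in terms of steps, for the boundary data `μ₁ = (c)` and `ν₁ = X`. -/
abbrev minusMult (c d : ℕ) (X : Multiset ℕ) : List Pt → ℕ :=
  stepMult (rect c d) (InitMinusRect d {c} X) (fun t => t < 0) (0, d)

lemma initMinusRect_pathFrom_iff :
    InitMinusRect d {c} X (pathFrom (0, d) σ) ↔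
      ∃ s : List ℕ, (s : Multiset ℕ) = X ∧ σ = dSteps s ++ [((c : ℤ), 0)] := by
  simp only [InitMinusRect, (pathFrom_injective _).eq_iff]
  constructor
  · rintro ⟨s, t, hs, ht, rfl⟩
    obtain rfl := Multiset.coe_eq_singleton.1 ht
    exact ⟨s, hs, by simp [hSteps_eq_map]⟩
  · rintro ⟨s, hs, rfl⟩
    exact ⟨s, [c], hs, rfl, by simp [hSteps_eq_map]⟩

lemma downSizes_dSteps (s : List ℕ) : downSizes (dSteps s) = s := by
  rw [dSteps_eq_map]
  induction s with
  | nil => rfl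
  | cons k s ih => rw [List.map_cons, downSizes_down, ih, Multiset.cons_coe]

lemma eq_dSteps (hpos : ∀ v ∈ S, Pos v) (h : ∀ v ∈ S, v.1 = 0) :
    S = dSteps (S.map (·.2.natAbs)) := by
  rw [dSteps_eq_map, List.map_map]
  refine (List.map_id S).symm.trans (List.map_congr_left fun v hv => ?_)
  have := hpos v hv
  simp only [Pos, h v hv] at this
  ext
  · simp [h v hv]
  · simp [abs_of_neg (show v.2 < 0 by lia)]

lemma det_last_nonneg {k : ℤ} (hσ : IsRectSteps c d (S ++ [u, (k, 0)])) : 0 ≤ det u (k, 0) := by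
  have hsum := congrArg Prod.snd hσ.sum
  have hS := hσ.mem_rect.2.2.1
  simp only [List.sum_append, List.sum_cons, List.sum_nil, Prod.snd_add, Prod.snd_zero] at hsum hS
  have hk : 0 < k := by simpa [Pos] using hσ.pos (k, 0) (by simp)
  have := mul_nonneg (show 0 ≤ -u.2 by lia) hk.le
  simp only [det]
  lia

theorem eq_of_minusMult_ne_zero {k : ℤ} (hσ : IsRectSteps c d (S ++ [(k, 0)]))
    (hm : minusMult c d X (S ++ [(k, 0)]) ≠ 0) : k = c := by
  refine hσ.stepMult_ne_zero_induction (e := -1) (motive := fun σ => ∀ S, σ = S ++ [(k, 0)] → k = c)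
    (by simp) (fun σ _ hinit S hS => ?_) (fun S u v T hσ huv ih S' hS => ?_)
    (fun S u v T hσ _ _ huv ih S' hS => ?_) hm S rfl
  · obtain ⟨s, -, rfl⟩ := initMinusRect_pathFrom_iff.1 hinit
    simpa using (List.append_inj' hS rfl).2.symm
  all_goals rcases last_or_of_append_cons_cons_eq hS with ⟨rfl, rfl, rfl⟩ | ⟨T, rfl, rfl⟩
  · exact absurd huv (det_last_nonneg hσ).not_gt
  · exact ih (S ++ (u + v) :: T) (by simp)
  · exact absurd huv (det_last_nonneg hσ).not_gt
  · exact ih (S ++ v :: u :: T) (by simp)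

lemma snd_pos_of_noTurn (hpos : ∀ v ∈ S ++ [u], Pos v) (hturn : NoTurn (· < 0) (S ++ [u]))
    (hsum : (S ++ [u]).sum.2 = 0) (hne : ∃ v ∈ S ++ [u], v.2 ≠ 0) : 0 < u.2 := by
  by_contra! hu
  exact (sum_snd_neg (snd_nonpos_of_noTurn hpos hturn hu) hne).ne hsum

lemma IsRectSteps.exists_snd_ne_zero_of_cut {T' : List Pt}
    (hσ : IsRectSteps c d (S ++ u :: v :: (T ++ T'))) (huv : det u v < 0) :
    ∃ w ∈ S ++ (u + v) :: T, w.2 ≠ 0 := by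
  by_contra! h
  simp only [List.forall_mem_append, List.forall_mem_cons, Prod.snd_add] at h
  have hS : S.sum.2 = 0 := (sum_snd_nonpos fun w hw => (h.1 w hw).le).antisymm
    (sum_snd_nonneg fun w hw => (h.1 w hw).ge)
  have hle := (IsRectSteps.mem_rect (S := S ++ [u]) (by simpa using hσ)).2.2.2
  have hu := hσ.pos u (by simp)
  have hv := hσ.pos v (by simp)
  simp only [Pos, det, List.sum_append, List.sum_singleton, Prod.snd_add] at *
  have h₁ := mul_nonneg (show 0 ≤ u.1 by lia) (show 0 ≤ v.2 by lia)
  have h₂ := mul_nonneg (show 0 ≤ -u.2 by lia) (show 0 ≤ v.1 by lia)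
  lia

theorem le_downSizes_of_minusMult_ne_zero (hσ : IsRectSteps c d (α ++ [w]))
    (hw : 0 < w.1 ∨ w = (0, -(d : ℤ)) ∧ ∃ v ∈ α, v.2 ≠ 0) (hm : minusMult c d X (α ++ [w]) ≠ 0) :
    X ≤ downSizes α := by
  refine hσ.stepMult_ne_zero_induction (e := -1) (motive := fun σ => ∀ α w, σ = α ++ [w] →
    0 < w.1 ∨ w = (0, -(d : ℤ)) ∧ (∃ v ∈ α, v.2 ≠ 0) → X ≤ downSizes α) (by simp)
    (fun σ _ hinit α w hα _ => ?_) (fun S u v T hσ huv ih α w hα hw => ?_)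
    (fun S u v T hσ hpush hturn huv ih α w hα hw => ?_) hm α w rfl hw
  · obtain ⟨s, rfl, rfl⟩ := initMinusRect_pathFrom_iff.1 hinit
    rw [← (List.append_inj' hα rfl).1, downSizes_dSteps]
  · have huv₁ := fst_add_pos_of_det_neg (hσ.pos u (by simp)) (hσ.pos v (by simp)) huv
    rcases last_or_of_append_cons_cons_eq hα with ⟨rfl, rfl, rfl⟩ | ⟨T, rfl, rfl⟩
    · rw [downSizes_append]
      exact (ih S (u + v) rfl (.inl huv₁)).trans (Multiset.le_add_right _ _)
    · rw [downSizes_cut huv₁.ne']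
      exact (ih _ w (by simp) (hw.imp_right fun h => ⟨h.1, hσ.exists_snd_ne_zero_of_cut huv⟩)).trans
        (Multiset.le_add_right _ _)
  · have hu₁ := fst_pos_of_det_neg (hσ.pos u (by simp)) (hσ.pos v (by simp)) huv
    rcases last_or_of_append_cons_cons_eq hα with ⟨rfl, rfl, rfl⟩ | ⟨T, rfl, rfl⟩
    · rcases hw with hv₁ | ⟨rfl, hne⟩
      · have := ih (S ++ [v]) u (by simp) (.inl hu₁)
        rw [downSizes_append, downSizes_cons_of_ne hv₁.ne', downSizes_nil, add_zero] at this
        rw [downSizes_append]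
        exact this.trans (Multiset.le_add_right _ _)
      · have hsum : (S ++ [u]).sum.2 = 0 := by simpa [← add_assoc] using congrArg Prod.snd hσ.sum
        have hpos : ∀ v ∈ S ++ [u], Pos v := fun v hv => hσ.pos v (by grind)
        exact absurd (IsRectSteps.snd_last_nonpos (S := S ++ [_]) (by simpa using hpush))
          (snd_pos_of_noTurn hpos hturn hsum hne).not_ge
    · rw [← downSizes_swap]
      exact ih _ w (by simp) (by simpa only [List.mem_append, List.mem_cons, or_left_comm] using hw)

/-- The steps of a step list that are not vertical. -/
def nonVertical (σ : List Pt) : List Pt := σ.filter (·.1 ≠ 0)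

lemma mem_nonVertical : v ∈ nonVertical σ ↔ v ∈ σ ∧ v.1 ≠ 0 := by
  simp [nonVertical]

lemma nonVertical_append : nonVertical (S ++ T) = nonVertical S ++ nonVertical T :=
  List.filter_append ..

lemma nonVertical_cons_of_ne (h : v.1 ≠ 0) : nonVertical (v :: σ) = v :: nonVertical σ := by
  simp [nonVertical, h]

lemma nonVertical_cons_of_eq (h : v.1 = 0) : nonVertical (v :: σ) = nonVertical σ := by
  simp [nonVertical, h]

lemma sum_eq_sum_nonVertical_sub (hpos : ∀ v ∈ σ, Pos v) :
    σ.sum = (nonVertical σ).sum - (0, ((downSizes σ).sum : ℤ)) := by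
  induction σ with
  | nil => rfl
  | cons v σ ih =>
    rw [List.forall_mem_cons] at hpos
    rw [List.sum_cons, ih hpos.2]
    by_cases hv : v.1 = 0
    · have hv₂ : v.2 < 0 := by simpa [Pos, hv] using hpos.1
      rw [nonVertical_cons_of_eq hv, downSizes_cons_of_eq hv, Multiset.sum_cons]
      ext
      · simp [hv]
      · simp only [Prod.snd_add, Prod.snd_sub, Nat.cast_add, Int.natCast_natAbs, abs_of_neg hv₂]
        ring
    · rw [nonVertical_cons_of_ne hv, downSizes_cons_of_ne hv, List.sum_cons, add_sub_assoc]

lemma IsRectSteps.sum_nonVertical_add_last (hσ : IsRectSteps c d (τ ++ [w]))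
    (hd : (downSizes τ).sum = d) : (nonVertical τ).sum + w = ((c : ℤ), 0) := by
  have hτ := sum_eq_sum_nonVertical_sub fun v hv => hσ.pos v (List.mem_append_left [w] hv)
  have hsum := hσ.sum
  rw [List.sum_append, List.sum_singleton, hτ, hd] at hsum
  rw [← sub_add_cancel (List.sum _ + w) (0, (d : ℤ)), add_sub_right_comm, hsum]
  simp

lemma IsRectSteps.push_of_nonVertical_nonneg (hσ : IsRectSteps c d (S ++ u :: v :: (T ++ [w])))
    (hu : u.1 ≠ 0) (hheight : ∀ x ∈ nonVertical (S ++ u :: v :: T), 0 ≤ x.2)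
    (hd : (downSizes (S ++ u :: v :: T)).sum ≤ d) :
    IsRectSteps c d (S ++ v :: u :: (T ++ [w])) := by
  refine hσ.push ?_
  have hpos : ∀ x ∈ S ++ [v], Pos x := fun x hx => hσ.pos x (by grind)
  have hsum := congrArg Prod.snd (sum_eq_sum_nonVertical_sub hpos)
  have hnonneg : 0 ≤ (nonVertical (S ++ [v])).sum.2 := by
    refine sum_snd_nonneg fun x hx => hheight x ?_
    simp only [mem_nonVertical, List.mem_append, List.mem_cons, List.not_mem_nil] at hx ⊢
    tauto
  have hle : (downSizes (S ++ [v])).sum ≤ d := by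
    refine (sum_le_sum_of_le ?_).trans hd
    rw [← downSizes_swap, show S ++ v :: u :: T = (S ++ [v]) ++ u :: T by simp,
      downSizes_append (T := u :: T)]
    exact Multiset.le_add_right _ _
  have hfst := sum_fst_nonneg hpos
  have huv := IsRectSteps.mem_rect (S := S ++ [u, v]) (T := T ++ [w]) (by simpa using hσ)
  have hu₂ := hheight u (by simp [mem_nonVertical, hu])
  have hu_pos := hσ.pos u (by simp)
  simp only [rect, Pos, Set.mem_ofPred_eq, List.sum_append, List.sum_cons, List.sum_nil,
    Prod.fst_add, Prod.snd_add, Prod.snd_sub, Prod.fst_zero, Prod.snd_zero] at *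
  lia

lemma areaProd_eq_zero_of_noTurn (hσ : IsRectSteps c d (τ ++ [w]))
    (hinit : ¬InitMinusRect d {c} (downSizes τ) (pathFrom (0, d) (τ ++ [w])))
    (hturn : NoTurn (· < 0) (τ ++ [w])) (hheight : ∀ v ∈ nonVertical τ, 0 ≤ v.2)
    (hd : (downSizes τ).sum = d) : areaProd ((c : ℤ), 0) (nonVertical τ) = 0 := by
  have hsum := hσ.sum_nonVertical_add_last hd
  rcases (nonVertical τ).eq_nil_or_concat with hτ | ⟨β, v, hτ⟩
  · have hfst : ∀ v ∈ τ, v.1 = 0 := by simpa [nonVertical] using hτ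
    have hτ' := eq_dSteps (fun v hv => hσ.pos v (by simp [hv])) hfst
    obtain rfl : w = ((c : ℤ), 0) := by simpa [hτ] using hsum
    refine absurd (initMinusRect_pathFrom_iff.2 ⟨_, ?_, by rw [← hτ']⟩) hinit
    rw [← downSizes_dSteps, ← hτ']
  · have hw : w.2 ≤ 0 := by
      have := congrArg Prod.snd hsum
      have := sum_snd_nonneg hheight
      simp only [Prod.snd_add] at *
      lia
    obtain ⟨hvτ, -⟩ : v ∈ τ ∧ v.1 ≠ 0 := mem_nonVertical.1 (by simp [hτ])
    have hdet := det_nonneg_of_noTurn hσ.pos hturn v hvτ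
    have hv₂ := hheight v (by simp [hτ])
    have hv_pos := hσ.pos v (List.mem_append_left _ hvτ)
    have hw_pos := hσ.pos w (by simp)
    rw [hτ, List.concat_eq_append, List.sum_append, List.sum_singleton, add_assoc] at hsum
    rw [hτ, List.concat_eq_append, areaProd_append, ← hsum, add_sub_cancel_left]
    refine mul_eq_zero_of_right _ ?_
    simp only [Pos, det, areaProd, Prod.fst_add, Prod.snd_add] at *
    have h₁ := mul_nonneg (show 0 ≤ v.1 by lia) (neg_nonneg.2 hw)
    have h₂ := mul_nonneg hv₂ (show 0 ≤ w.1 by lia)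
    linarith

lemma minusMult_push_last_eq_zero (hσ : IsRectSteps c d (S ++ [u, w]))
    (hturn : NoTurn (· < 0) (S ++ [u])) (huw : det u w < 0)
    (hheight : ∀ v ∈ nonVertical (S ++ [u]), 0 ≤ v.2) (hd : (downSizes (S ++ [u])).sum = d) :
    minusMult c d X (S ++ [w, u]) = 0 := by
  by_contra hm
  have hpush := hσ.push_of_inside (inside_of_stepMult_ne_zero hm)
  have hu := IsRectSteps.snd_last_nonpos (S := S ++ [w]) (by simpa using hpush)
  have hpos : ∀ v ∈ S ++ [u], Pos v := fun v hv => hσ.pos v (by grind)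
  have hnonpos := snd_nonpos_of_noTurn hpos hturn hu
  have hsum := congrArg Prod.snd (IsRectSteps.sum_nonVertical_add_last (by simpa using hσ) hd)
  have hle : (nonVertical (S ++ [u])).sum.2 ≤ 0 :=
    sum_snd_nonpos fun v hv => hnonpos v (mem_nonVertical.1 hv).1
  have hw₂ : w.2 = 0 := by
    have := sum_snd_nonneg hheight
    simp only [Prod.snd_add] at *
    lia
  have hu₁ := fst_pos_of_det_neg (hσ.pos u (by simp)) (hσ.pos w (by simp)) huw
  have hu₂ : u.2 = 0 := hu.antisymm (hheight u (by simp [mem_nonVertical, hu₁.ne']))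
  simp [det, hu₂, hw₂] at huw

lemma minusMult_cut_eq_zero (hσ : IsRectSteps c d (S ++ u :: v :: (T ++ [w])))
    (hw : 0 < w.1 ∨ w = (0, -(d : ℤ))) (huv : det u v < 0) (hv : v.1 = 0) :
    minusMult c d (downSizes (S ++ u :: v :: T)) (S ++ (u + v) :: (T ++ [w])) = 0 := by
  by_contra hm
  have huv₁ := fst_add_pos_of_det_neg (hσ.pos u (by simp)) (hσ.pos v (by simp)) huv
  have hle := le_downSizes_of_minusMult_ne_zero (α := S ++ (u + v) :: T) (w := w)
    (by simpa using hσ.cut) (hw.imp_right fun h => ⟨h, hσ.exists_snd_ne_zero_of_cut huv⟩)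
    (by simpa using hm)
  rw [downSizes_cut huv₁.ne'] at hle
  have hmem : v.2.natAbs ∈ downSizes [u, v] := by
    rw [downSizes_eq_of_perm (.swap v u []), downSizes_cons_of_eq hv]
    exact Multiset.mem_cons_self _ _
  have := Multiset.card_pos_iff_exists_mem.2 ⟨_, hmem⟩
  have := Multiset.card_le_card hle
  rw [Multiset.card_add] at this
  lia

lemma areaProd_nonVertical_concat (hu : u.1 ≠ 0)
    (hsum : (nonVertical (S ++ [u])).sum + w = ((c : ℤ), 0)) :
    areaProd ((c : ℤ), 0) (nonVertical (S ++ [u])) =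
      -det u w * areaProd ((c : ℤ), 0) (nonVertical S) := by
  rw [nonVertical_append, nonVertical_cons_of_ne hu] at hsum ⊢
  rw [show nonVertical [] = [] from rfl, List.sum_append, List.sum_singleton, add_assoc] at hsum
  rw [areaProd_append, ← hsum, add_sub_cancel_left]
  simp only [nonVertical, List.filter_nil, areaProd, det, Prod.fst_add, Prod.snd_add]
  ring

lemma areaProd_nonVertical_swap (hu : u.1 ≠ 0) (hv : v.1 ≠ 0) (huv : (u + v).1 ≠ 0) (z : Pt) :
    areaProd z (nonVertical (S ++ u :: v :: T)) =
      -det u v * areaProd z (nonVertical (S ++ (u + v) :: T)) +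
        areaProd z (nonVertical (S ++ v :: u :: T)) := by
  simp only [nonVertical_append, nonVertical_cons_of_ne hu, nonVertical_cons_of_ne hv,
    nonVertical_cons_of_ne huv, areaProd_append, areaProd_swap (z - _) u v, det]
  ring

lemma snd_nonneg_of_cut (hu : u.1 ≠ 0) (hv : v.1 ≠ 0)
    (h : ∀ x ∈ nonVertical (S ++ u :: v :: T), 0 ≤ x.2) :
    ∀ x ∈ nonVertical (S ++ (u + v) :: T), 0 ≤ x.2 := by
  simp only [mem_nonVertical, List.mem_append, List.mem_cons] at h ⊢
  rintro x ⟨hx | rfl | hx, hx₁⟩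
  · exact h x ⟨.inl hx, hx₁⟩
  · exact add_nonneg (h u ⟨by simp, hu⟩) (h v ⟨by simp, hv⟩)
  · exact h x ⟨by simp [hx], hx₁⟩

theorem minusMult_eq_areaProd (hd : X.sum = d) (hσ : IsRectSteps c d (τ ++ [w]))
    (hw : 0 < w.1 ∨ w = (0, -(d : ℤ))) (hX : downSizes τ = X)
    (hheight : ∀ v ∈ nonVertical τ, 0 ≤ v.2) :
    (minusMult c d X (τ ++ [w]) : ℤ) = areaProd ((c : ℤ), 0) (nonVertical τ) := by
  refine hσ.stepMult_induction (e := -1) (motive := fun σ m => ∀ τ w, σ = τ ++ [w] →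
    0 < w.1 ∨ w = (0, -(d : ℤ)) → downSizes τ = X → (∀ v ∈ nonVertical τ, 0 ≤ v.2) →
    (m : ℤ) = areaProd ((c : ℤ), 0) (nonVertical τ)) (by simp) ?_ ?_ ?_ τ w rfl hw hX hheight
  · intro σ _ hinit τ w hτ _ _ _
    obtain ⟨s, -, rfl⟩ := initMinusRect_pathFrom_iff.1 hinit
    rw [← (List.append_inj' hτ rfl).1]
    rw [show nonVertical (dSteps s) = [] by simp [nonVertical, dSteps_eq_map]]
    rfl
  · rintro _ hσ hinit hturn τ w rfl - rfl hheight
    exact (areaProd_eq_zero_of_noTurn hσ hinit hturn hheight hd).symm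
  · rintro S u v T hσ hturn huv ihcut ihpush τ w hτ hw rfl hheight
    change ((_ * minusMult c d _ _ + minusMult c d _ _ : ℕ) : ℤ) = _
    have hu₁ := fst_pos_of_det_neg (hσ.pos u (by simp)) (hσ.pos v (by simp)) huv
    have huv₁ := fst_add_pos_of_det_neg (hσ.pos u (by simp)) (hσ.pos v (by simp)) huv
    rcases last_or_of_append_cons_cons_eq hτ with ⟨rfl, rfl, rfl⟩ | ⟨T, rfl, rfl⟩
    · have hcut := ihcut S (u + v) rfl (.inl huv₁)
        (by rw [downSizes_append, downSizes_cons_of_ne hu₁.ne', downSizes_nil, add_zero])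
        fun v hv => hheight v (by simp [nonVertical_append, hv])
      rw [minusMult_push_last_eq_zero hσ hturn huv hheight hd, areaProd_nonVertical_concat hu₁.ne'
        (IsRectSteps.sum_nonVertical_add_last (by simpa using hσ) hd), ← hcut]
      push_cast
      rw [abs_of_neg huv, add_zero]
    have hpush := ihpush (hσ.push_of_nonVertical_nonneg hu₁.ne' hheight hd.le) (S ++ v :: u :: T) w
      (by simp) hw downSizes_swap fun x hx => hheight x (by
        simpa only [mem_nonVertical, List.mem_append, List.mem_cons, or_left_comm] using hx)
    by_cases hv₁ : v.1 = 0
    · rw [minusMult_cut_eq_zero hσ hw huv hv₁, mul_zero, zero_add]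
      refine Eq.trans hpush ?_
      simp only [nonVertical_append, nonVertical_cons_of_ne hu₁.ne', nonVertical_cons_of_eq hv₁]
    · have hcut := ihcut (S ++ (u + v) :: T) w (by simp) hw
        (by simp only [downSizes_append, downSizes_cons_of_ne hu₁.ne', downSizes_cons_of_ne hv₁,
          downSizes_cons_of_ne huv₁.ne'])
        (snd_nonneg_of_cut hu₁.ne' hv₁ hheight)
      rw [areaProd_nonVertical_swap hu₁.ne' hv₁ huv₁.ne', ← hcut, ← hpush]
      push_cast
      rw [abs_of_neg huv]

end MinusMult

/-! ### Contributing paths -/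

section Contributing

variable {c d : ℕ} {α S : List Pt} {P Q X : Multiset ℕ} {γ : List Pt}

lemma Run.sum_fst_add_card_downSizes (h : Run S P Q) :
    S.sum.1 + (downSizes S).card = S.length := by
  have hS := h.down_or_up
  clear h
  induction S with
  | nil => simp [downSizes_nil]
  | cons v S ih =>
    rw [List.forall_mem_cons] at hS
    have := ih hS.2
    rcases hS.1 with ⟨hv, -⟩ | ⟨hv, -⟩
    · rw [downSizes_cons_of_eq hv]
      simp only [List.sum_cons, Prod.fst_add, Multiset.card_cons, List.length_cons]
      lia
    · rw [downSizes_cons_of_ne (by simp [hv])]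
      simp only [List.sum_cons, Prod.fst_add, List.length_cons]
      lia

lemma Run.eq_add_downSizes (h : Run S P Q) (hS : S.sum.1 = 0) : Q = P + downSizes S := by
  induction S generalizing P with
  | nil => simpa [downSizes_nil] using Eq.symm h
  | cons v S ih =>
    simp only [List.sum_cons, Prod.fst_add] at hS
    rcases h with ⟨b, -, rfl, h⟩ | ⟨M, P', rfl, rfl, h⟩
    · rw [ih h (by simpa using hS), downSizes_down, Multiset.cons_add, Multiset.add_cons]
    · have := sum_fst_nonneg h.pos
      lia

lemma Run.pos_of_mem_downSizes (h : Run S P Q) : ∀ b ∈ downSizes S, 0 < b := by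
  intro b hb
  obtain ⟨v, ⟨hv, hv₁⟩, rfl⟩ : ∃ v, (v ∈ S ∧ v.1 = 0) ∧ v.2.natAbs = b := by
    simpa [downSizes] using hb
  have := h.down_or_up v hv
  lia

lemma Run.downSizes_eq_of_minusMult_ne_zero (h : Run α 0 0)
    (hσ : IsRectSteps c d (α ++ [(0, -(d : ℤ))])) (hlen : α.length = X.card + c)
    (hX : 0 < X.card) (hm : minusMult c d X (α ++ [(0, -(d : ℤ))]) ≠ 0) : downSizes α = X := by
  have hfst : α.sum.1 = c := by simpa using congrArg Prod.fst hσ.sum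
  have hcard : (downSizes α).card = X.card := by
    have := h.sum_fst_add_card_downSizes
    lia
  refine (Multiset.eq_of_le_of_card_le
    (le_downSizes_of_minusMult_ne_zero hσ (.inr ⟨rfl, ?_⟩) hm) hcard.le).symm
  by_contra! hflat
  rw [downSizes_eq_zero fun v hv hv₁ => ?_, Multiset.card_zero] at hcard
  · exact hX.ne hcard
  · have := h.down_or_up v hv
    have := hflat v hv
    lia

/-- If the last step were an up step then, by positivity of `mult₋`, it would be `(c, 0)` with
`c = 1`, and the remaining steps would be `X.card + 1` down steps whose sizes the last step does not
take out of the stock. -/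
lemma Run.minusMult_eq_zero_of_last_up {M : Multiset ℕ} (h : Run α 0 (M + {d}))
    (hσ : IsRectSteps c d (α ++ [(1, (M.sum : ℤ))])) (hlen : α.length = X.card + c)
    (hX : 0 < X.card) : minusMult c d X (α ++ [(1, (M.sum : ℤ))]) = 0 := by
  by_contra hm
  have hM : M.sum = 0 := by
    have hle : (M.sum : ℤ) ≤ 0 := hσ.snd_last_nonpos
    lia
  rw [hM, Nat.cast_zero] at hσ hm
  have hc : (1 : ℤ) = c := eq_of_minusMult_ne_zero hσ hm
  have hfst : α.sum.1 = 0 := by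
    have := congrArg Prod.fst hσ.sum
    simp only [List.sum_append, List.sum_singleton, Prod.fst_add] at this
    lia
  have hP : M + {d} = downSizes α := by rw [h.eq_add_downSizes hfst, zero_add]
  obtain rfl : M = 0 := Multiset.eq_zero_of_forall_notMem fun b hb =>
    (h.pos_of_mem_downSizes b (hP ▸ Multiset.mem_add.2 (.inl hb))).ne'
      (Multiset.sum_eq_zero_iff.1 hM b hb)
  have hcard := h.sum_fst_add_card_downSizes
  rw [← hP, zero_add, Multiset.card_singleton] at hcard
  lia

lemma multRect_pathFrom (hσ : IsRectSteps c d α) :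
    multRect c d {c} (Multiset.replicate c 1) X {d} (pathFrom (0, d) α) =
      plusMult c d α * minusMult c d X α := by
  rw [plusMult, minusMult, stepMult, stepMult, if_pos hσ.inside, if_pos hσ.inside]
  rfl

theorem exists_run_of_multRect_ne_zero (hX : 0 < X.card) (hγ : IsPathRect c d γ)
    (hlen : γ.length = X.card + c + 2)
    (hm : multRect c d {c} (Multiset.replicate c 1) X {d} γ ≠ 0) :
    ∃ α, γ = pathFrom (0, d) (α ++ [(0, -(d : ℤ))]) ∧ Run α 0 0 ∧ downSizes α = X := by
  obtain ⟨σ, rfl, hσ⟩ := isPathRect_iff.1 hγ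
  rw [multRect_pathFrom hσ] at hm
  obtain ⟨hplus, hminus⟩ := mul_ne_zero_iff.1 hm
  rw [length_pathFrom] at hlen
  rcases List.eq_nil_or_concat' σ with rfl | ⟨α, w, rfl⟩
  · simp at hlen
  simp only [List.length_append, List.length_singleton] at hlen
  obtain ⟨P, hα, ⟨b, -, rfl, hw⟩ | ⟨M, P', rfl, rfl, hw⟩⟩ :=
    run_append.1 (run_of_plusMult_ne_zero hσ hplus)
  · obtain ⟨rfl, rfl⟩ : d = b ∧ P = 0 := (Multiset.singleton_eq_cons_iff P).1 (Eq.symm hw)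
    exact ⟨α, rfl, hα, hα.downSizes_eq_of_minusMult_ne_zero hσ (by lia) hX hminus⟩
  · obtain rfl : P' = {d} := hw
    exact absurd (hα.minusMult_eq_zero_of_last_up hσ (by lia) hX) hminus

theorem Run.multRect_eq (h : Run α 0 0) (hX : HasDistinctSubsums X) (hα : downSizes α = X)
    (hσ : IsRectSteps c X.sum (α ++ [(0, -(X.sum : ℤ))])) :
    (multRect c X.sum {c} (Multiset.replicate c 1) X {X.sum}
        (pathFrom (0, X.sum) (α ++ [(0, -(X.sum : ℤ))])) : ℤ) =
      X.prod * areaProd ((c : ℤ), 0) (nonVertical α) := by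
  have hplus := plusMult_eq_prod_downSizes hX le_rfl hσ h hα.le
  have hminus := minusMult_eq_areaProd rfl hσ (.inr rfl) hα fun v hv => ?_
  · rw [multRect_pathFrom hσ, Nat.cast_mul, hplus, hminus, hα]
  · obtain ⟨hv, hv₁⟩ := mem_nonVertical.1 hv
    have := h.down_or_up v hv
    lia

end Contributing

/-! ### Words -/

/-- The labels of the steps of a run over stocks of entries of `x : ι → ℕ`: `.inl i` is the down
step of size `x i`, and `.inr I` is the up step that takes the entries indexed by `I` out of the
stock. Unlike the steps, the labels do not depend on `x`. -/
abbrev Letter (ι : Type*) := ι ⊕ Finset ι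

section Words

variable {ι R R' : Type*} [CommRing R] [CommRing R']

/-- The step labelled by a letter, for the entries `y` in any commutative ring: in `ℤ` it is an
actual step, and in `MvPolynomial ι ℚ` its generic form. -/
def letterStep (y : ι → R) : Letter ι → R × R
  | .inl i => (0, -y i)
  | .inr I => (1, ∑ i ∈ I, y i)

/-- The sequence of steps labelled by the up letters of a word. -/
def upSteps (y : ι → R) (w : List (Letter ι)) : List (R × R) :=
  (w.filter Sum.isRight).map (letterStep y)

/-- The labels of the down steps of a word. -/
def downLabels (w : List (Letter ι)) : Multiset ι := (w.filterMap Sum.getLeft? : List ι)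

/-- The counterpart of `Run` for words: the stock is a multiset of labels, and the word
empties it. -/
def EmptiesStock : List (Letter ι) → Multiset ι → Prop
  | [], P => P = 0
  | .inl i :: w, P => EmptiesStock w (i ::ₘ P)
  | .inr I :: w, P => ∃ P', P = I.val + P' ∧ EmptiesStock w P'

/-- The multiplicity of the path labelled by a word, for the entries `y` in any commutative
ring. -/
def wordMult [Fintype ι] (c : ℕ) (y : ι → R) (w : List (Letter ι)) : R :=
  (∏ i, y i) * areaProd ((c : R), 0) (upSteps y w)

lemma map_letterStep (f : R →+* R') (y : ι → R) (a : Letter ι) :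
    Prod.map f f (letterStep y a) = letterStep (f ∘ y) a := by
  cases a <;> simp [letterStep]

lemma map_wordMult [Fintype ι] (f : R →+* R') (c : ℕ) (y : ι → R) (w : List (Letter ι)) :
    f (wordMult c y w) = wordMult c (f ∘ y) w := by
  simp [wordMult, upSteps, map_areaProd, map_letterStep, Function.comp_def]

/-- The entries `x`, as a multiset. -/
abbrev entries [Fintype ι] (x : ι → ℕ) : Multiset ℕ := Finset.univ.val.map x

/-- The steps labelled by a word. -/
def wordSteps (x : ι → ℕ) (w : List (Letter ι)) : List Pt := w.map (letterStep fun i => (x i : ℤ))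

variable {x : ι → ℕ} {w : List (Letter ι)} {P : Multiset ι} {c : ℕ}

lemma nonVertical_wordSteps : nonVertical (wordSteps x w) = upSteps (fun i => (x i : ℤ)) w := by
  rw [nonVertical, wordSteps, upSteps, List.filter_map]
  congr 2
  funext a
  cases a <;> simp [letterStep]

lemma downSizes_wordSteps : downSizes (wordSteps x w) = (downLabels w).map x := by
  induction w with
  | nil => rfl
  | cons a w ih =>
    rcases a with i | I
    · simpa [downSizes, downLabels, wordSteps, letterStep] using ih
    · simpa [downSizes, downLabels, wordSteps, letterStep, List.filterMap_cons] using ih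

lemma EmptiesStock.run (hx : ∀ i, 0 < x i) (h : EmptiesStock w P) :
    Run (wordSteps x w) (P.map x) 0 := by
  induction w generalizing P with
  | nil => simp [Run, wordSteps, show P = 0 from h]
  | cons a w ih =>
    rcases a with i | I
    · exact .inl ⟨x i, hx i, rfl, by simpa [wordSteps] using ih h⟩
    · obtain ⟨P', rfl, h⟩ := h
      exact .inr ⟨I.val.map x, P'.map x, Multiset.map_add _ _ _, by simp [letterStep], ih h⟩

lemma exists_map_eq_of_le {s : Multiset ι} {t : Multiset ℕ} (h : t ≤ s.map x) :
    ∃ s' ≤ s, s'.map x = t := by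
  induction s using Multiset.induction generalizing t with
  | empty => exact ⟨0, le_rfl, by simpa [eq_comm] using h⟩
  | cons i s ih =>
    rw [Multiset.map_cons] at h
    by_cases hi : x i ∈ t
    · obtain ⟨t, rfl⟩ := Multiset.exists_cons_of_mem hi
      obtain ⟨s', hs', rfl⟩ := ih ((Multiset.cons_le_cons_iff _).1 h)
      exact ⟨i ::ₘ s', Multiset.cons_le_cons i hs', Multiset.map_cons _ _ _⟩
    · obtain ⟨s', hs', rfl⟩ := ih ((Multiset.le_cons_of_notMem hi).1 h)
      exact ⟨s', hs'.trans (Multiset.le_cons_self _ _), rfl⟩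

variable [Fintype ι]

lemma Run.exists_word (hX : (entries x).Nodup) {α : List Pt} (h : Run α (P.map x) 0)
    (hle : P.map x + downSizes α ≤ entries x) :
    ∃ w, wordSteps x w = α ∧ EmptiesStock w P := by
  induction α generalizing P with
  | nil => exact ⟨[], rfl, by simpa [Run, EmptiesStock] using h⟩
  | cons v α ih =>
    rcases h with ⟨b, -, rfl, h⟩ | ⟨M, P₁, hP, rfl, h⟩
    · rw [downSizes_down, Multiset.add_cons, ← Multiset.cons_add] at hle
      obtain ⟨i, -, rfl⟩ := Multiset.mem_map.1
        (Multiset.mem_of_le ((Multiset.le_add_right _ _).trans hle) (Multiset.mem_cons_self b _))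
      rw [← Multiset.map_cons] at h hle
      obtain ⟨w, rfl, hw⟩ := ih h hle
      exact ⟨.inl i :: w, rfl, hw⟩
    · rw [downSizes_cons_of_ne one_ne_zero] at hle
      obtain ⟨I, hI, rfl⟩ := exists_map_eq_of_le (hP ▸ Multiset.le_add_right M P₁)
      obtain ⟨P', rfl⟩ := Multiset.le_iff_exists_add.1 hI
      obtain rfl : P'.map x = P₁ := by simpa using hP
      have hI_le : I.map x ≤ entries x :=
        (Multiset.map_le_map hI).trans ((Multiset.le_add_right _ _).trans hle)
      have hI_nodup : I.Nodup := .of_map x (Multiset.nodup_of_le hI_le hX)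
      rw [Multiset.map_add, add_assoc] at hle
      obtain ⟨w, rfl, hw⟩ := ih h ((Multiset.le_add_left _ _).trans hle)
      exact ⟨.inr ⟨I, hI_nodup⟩ :: w, by simp [wordSteps, letterStep], P', rfl, hw⟩

lemma HasDistinctSubsums.injective (hX : HasDistinctSubsums (entries x)) : Function.Injective x :=
  fun i j hij =>
    Multiset.inj_on_of_nodup_map hX.nodup i (Finset.mem_univ_val i) j (Finset.mem_univ_val j) hij

lemma letterStep_injective (hX : HasDistinctSubsums (entries x)) :
    Function.Injective (letterStep fun i => (x i : ℤ)) := by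
  rintro (i | I) (j | J) h
  · simpa [letterStep, hX.injective.eq_iff] using h
  · simp [letterStep] at h
  · simp [letterStep] at h
  · have hle (K : Finset ι) : K.val.map x ≤ entries x :=
      Multiset.map_le_map (Finset.val_le_iff.2 K.subset_univ)
    rw [Sum.inr.injEq, ← Finset.val_inj]
    refine Multiset.map_injective hX.injective (hX.eq_of_sum_eq _ _ (hle I) (hle J) ?_)
    simp only [letterStep, Prod.mk.injEq, true_and] at h
    exact_mod_cast h

lemma finite_setOf_emptiesStock (c : ℕ) :
    {w : List (Letter ι) | EmptiesStock w 0 ∧ downLabels w = Finset.univ.val ∧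
      w.length = Fintype.card ι + c}.Finite :=
  (List.finite_length_eq (Letter ι) _).subset fun _ h => h.2.2

/-- The words that label the paths of nonzero multiplicity. -/
def goodWords (ι : Type*) [Fintype ι] (c : ℕ) : Finset (List (Letter ι)) :=
  (finite_setOf_emptiesStock (ι := ι) c).toFinset

lemma mem_goodWords : w ∈ goodWords ι c ↔ EmptiesStock w 0 ∧ downLabels w = Finset.univ.val ∧
    w.length = Fintype.card ι + c := by
  simp [goodWords]

/-- The path labelled by a good word: its last step, down to the corner `(c, 0)`, has no label. -/
def wordPath (x : ι → ℕ) (w : List (Letter ι)) : List Pt :=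
  pathFrom (0, (∑ i, x i : ℕ)) (wordSteps x w ++ [(0, -((∑ i, x i : ℕ) : ℤ))])

lemma isRectSteps_of_mem_goodWords [Nonempty ι] (hx : ∀ i, 0 < x i) (hw : w ∈ goodWords ι c) :
    IsRectSteps c (∑ i, x i) (wordSteps x w ++ [(0, -((∑ i, x i : ℕ) : ℤ))]) := by
  obtain ⟨hrun, hlabels, hlen⟩ := mem_goodWords.1 hw
  have hrun : Run (wordSteps x w) 0 0 := hrun.run hx
  have hX : downSizes (wordSteps x w) = entries x := by rw [downSizes_wordSteps, hlabels]
  have hd : 0 < ∑ i, x i := Finset.sum_pos (fun i _ => hx i) Finset.univ_nonempty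
  refine hrun.isRectSteps (by rw [hX]; rfl) hd ?_
  have := hrun.sum_fst_add_card_downSizes
  have hlen' : (wordSteps x w).length = Fintype.card ι + c := by
    rw [wordSteps, List.length_map, hlen]
  rw [hX, hlen', Multiset.card_map, Finset.card_val, Finset.card_univ] at this
  lia

lemma length_wordPath (hw : w ∈ goodWords ι c) :
    (wordPath x w).length = Fintype.card ι + c + 2 := by
  simp [wordPath, wordSteps, length_pathFrom, (mem_goodWords.1 hw).2.2]

/-- `N_rect` counts paths with `d = ∑ i, x i` and this multiplicity. -/
abbrev entriesMult (c : ℕ) (x : ι → ℕ) : List Pt → ℕ :=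
  multRect c (∑ i, x i) {c} (Multiset.replicate c 1) (entries x) {∑ i, x i}

theorem multRect_wordPath [Nonempty ι] (hx : ∀ i, 0 < x i) (hX : HasDistinctSubsums (entries x))
    (hw : w ∈ goodWords ι c) :
    (entriesMult c x (wordPath x w) : R) = wordMult c (fun i => (x i : R)) w := by
  obtain ⟨hrun, hlabels, -⟩ := mem_goodWords.1 hw
  have hdown : downSizes (wordSteps x w) = entries x := by rw [downSizes_wordSteps, hlabels]
  have hint : (entriesMult c x (wordPath x w) : ℤ) = wordMult c (fun i => (x i : ℤ)) w := by
    refine ((hrun.run hx).multRect_eq hX hdown (isRectSteps_of_mem_goodWords hx hw)).trans ?_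
    rw [nonVertical_wordSteps, wordMult, ← Nat.cast_prod]
    rfl
  have hR := congrArg (Int.castRingHom R) hint
  rw [map_wordMult] at hR
  simpa [Function.comp_def] using hR

theorem exists_wordPath_eq [Nonempty ι] (hX : HasDistinctSubsums (entries x)) {γ : List Pt}
    (hγ : IsPathRect c (∑ i, x i) γ) (hlen : γ.length = Fintype.card ι + c + 2)
    (hm : entriesMult c x γ ≠ 0) : ∃ w ∈ goodWords ι c, wordPath x w = γ := by
  have hcard : (entries x).card = Fintype.card ι := by simp [Finset.card_univ]
  obtain ⟨α, rfl, hα, hdown⟩ :=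
    exists_run_of_multRect_ne_zero (hcard ▸ Fintype.card_pos) hγ (hcard ▸ hlen) hm
  obtain ⟨w, rfl, hw⟩ := hα.exists_word (P := 0) hX.nodup (by simp [hdown])
  rw [downSizes_wordSteps] at hdown
  refine ⟨w, mem_goodWords.2 ⟨hw, Multiset.map_injective hX.injective hdown, ?_⟩, rfl⟩
  simpa [length_pathFrom, wordSteps] using hlen

lemma wordPath_injective (hX : HasDistinctSubsums (entries x)) :
    Function.Injective (wordPath x) := fun _ _ h =>
  List.map_injective_iff.2 (letterStep_injective hX)
    (List.append_cancel_right (pathFrom_injective _ h))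

theorem finsum_entriesMult [Nonempty ι] (hx : ∀ i, 0 < x i) (hX : HasDistinctSubsums (entries x)) :
    ∑ᶠ γ ∈ {γ | IsPathRect c (∑ i, x i) γ ∧ γ.length = Fintype.card ι + c + 2},
      entriesMult c x γ = ∑ w ∈ goodWords ι c, entriesMult c x (wordPath x w) := by
  rw [← Finset.sum_image (s := goodWords ι c) (g := wordPath x) (wordPath_injective hX).injOn]
  refine finsum_mem_eq_sum_of_inter_support_eq _ (Set.ext fun γ => ?_)
  simp only [Set.mem_inter_iff, Set.mem_ofPred_eq, Function.mem_support, Finset.coe_image,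
    Set.mem_image, Finset.mem_coe]
  refine and_congr_left fun hm => ⟨fun ⟨hγ, hlen⟩ => exists_wordPath_eq hX hγ hlen hm, ?_⟩
  rintro ⟨w, hw, rfl⟩
  exact ⟨isPathRect_iff.2 ⟨_, rfl, isRectSteps_of_mem_goodWords hx hw⟩, length_wordPath hw⟩

end Words

lemma Generic.hasDistinctSubsums {n : ℕ} {x : Fin n → ℕ} (h : Generic x) :
    HasDistinctSubsums (entries x) := by
  have hx : Function.Injective x := fun i j hij => by
    by_contra hne
    exact h {i} {j} (by simpa using hne) (by simpa using hij)
  have hX : (entries x).Nodup := Multiset.Nodup.map hx Finset.univ.nodup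
  refine ⟨hX, fun M N hM hN hMN => ?_⟩
  obtain ⟨I, hI, rfl⟩ := exists_map_eq_of_le hM
  obtain ⟨J, hJ, rfl⟩ := exists_map_eq_of_le hN
  by_contra hne
  refine h ⟨I, Multiset.nodup_of_le hI Finset.univ.nodup⟩
    ⟨J, Multiset.nodup_of_le hJ Finset.univ.nodup⟩ (fun hIJ => hne ?_) hMN
  rw [Finset.mk.injEq] at hIJ
  rw [hIJ]

/-- The count `N_rect(x₁,…,xₙ)` of lattice paths (with multiplicity) in
the rectangle with boundary data `μ₁ = (c)`, `μ₂ = (1,…,1)`, `ν₁ = (x₁,…,xₙ)`, `ν₂ = (d)`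
is given by a single polynomial for all generic positive `x₁,…,xₙ`. -/
theorem Nrect_polynomial (c n : ℕ) (hc : 0 < c) (hn : 0 < n) :
    ∃ P : MvPolynomial (Fin n) ℚ,
      ∀ x : Fin n → ℕ, (∀ i, 0 < x i) → Generic x →
        ((∑ᶠ γ ∈ {γ : List Pt | IsPathRect c (∑ i, x i) γ ∧ γ.length = n + c + 2},
            multRect c (∑ i, x i) {c} (Multiset.replicate c 1)
              ((List.ofFn x : List ℕ) : Multiset ℕ) {∑ i, x i} γ : ℕ) : ℚ)
          = MvPolynomial.eval (fun i => ((x i : ℚ))) P := by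
  refine ⟨∑ w ∈ goodWords (Fin n) c, wordMult c MvPolynomial.X w, fun x hx hgen => ?_⟩
  have : Nonempty (Fin n) := ⟨⟨0, hn⟩⟩
  have hX := hgen.hasDistinctSubsums
  have hsum := finsum_entriesMult (c := c) hx hX
  rw [Fintype.card_fin] at hsum
  rw [← Fin.univ_val_map, hsum, map_sum, Nat.cast_sum]
  refine Finset.sum_congr rfl fun w hw => ?_
  rw [multRect_wordPath hx hX hw, map_wordMult]
  congr 1
  ext i
  simp

end TropPaths
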